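/- arXiv:1110.5373 — 2 statements merged into one kernel-verified Lean document; each statement's English description precedes it below -/
import Mathlib

section
/- Let Γ = (V,E) be a simple finite connected graph, q : V → ℝ a potential, and H(Γ) = Q − C the discrete Schrödinger operator, where Q = diag(q) and C is the adjacency matrix of Γ. Let β = |E| − |V| + 1, fix a spanning tree of Γ, and let S = {e_1, …, e_β} be the edges not in the tree, with e_j = (u_j, v_j). Suppose f is an eigenvector of H(Γ) corresponding to a simple eigenvalue λ_n(H(Γ)) (the n-th smallest) and f is nonzero at every vertex. Let φ be the number of edges (u,v) ∈ E with f_u f_v < 0, set γ̃_j = f_{v_j}/f_{u_j}, and let p = #{j : γ̃_j < 0}. For γ = (γ_1,…,γ_β) with all γ_j nonzero, let H(Γ^cut_γ) be the matrix obtained from H(Γ) by, for each j, setting the (u_j,v_j) and (v_j,u_j) entries to 0 and replacing the diagonal entries q_{u_j}, q_{v_j} by q_{u_j} − γ_j and q_{v_j} − 1/γ_j. Then (γ̃_1,…,γ̃_β) is a critical point of the function γ ↦ λ_{φ−p+1}(H(Γ^cut_γ)) and its Morse index (the number of negative eigenvalues of the Hessian of this function at (γ̃_1,…,γ̃_β))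 equals n − 1 + β − φ. -/
open Matrix

/-- The eigenvalues of a Hermitian matrix, sorted in increasing order and counted with
multiplicity (junk value `0` if the matrix is not Hermitian); `sE M i` is the `i`-th sorted
eigenvalue, 0-based, with junk value `0` out of range. -/
noncomputable def sortedEigs {𝕜 : Type*} [RCLike 𝕜] {d : ℕ} (M : Matrix (Fin d) (Fin d) 𝕜) :
    Fin d → ℝ :=
  if h : M.IsHermitian then h.eigenvalues ∘ Tuple.sort h.eigenvalues else 0

noncomputable def sE {𝕜 : Type*} [RCLike 𝕜] {d : ℕ} (M : Matrix (Fin d) (Fin d) 𝕜)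
    (i : ℕ) : ℝ :=
  if h : i < d then sortedEigs M ⟨i, h⟩ else 0

/-- The discrete Schrödinger operator `H(Γ) = Q - C` of a graph `G` with potential `q`. -/
noncomputable def schrodOp {N : ℕ} (G : SimpleGraph (Fin N)) [DecidableRel G.Adj]
    (q : Fin N → ℝ) : Matrix (Fin N) (Fin N) ℝ :=
  Matrix.diagonal q - G.adjMatrix ℝ

/-- The cut operator `H(Γ^cut_γ)`: for each `j`, the matrix entries at `(uE j, vE j)` and
`(vE j, uE j)` (equal to `-1` in `H(Γ)`) are replaced by `0` and the diagonal entries at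
`uE j`, `vE j` are decreased by `γ j` and `(γ j)⁻¹` respectively. -/
noncomputable def schrodCut {N β : ℕ} (G : SimpleGraph (Fin N)) [DecidableRel G.Adj]
    (q : Fin N → ℝ) (uE vE : Fin β → Fin N) (γ : Fin β → ℝ) :
    Matrix (Fin N) (Fin N) ℝ :=
  schrodOp G q - ∑ j : Fin β, Matrix.of (fun a b =>
    if a = uE j ∧ b = uE j then γ j
    else if a = vE j ∧ b = vE j then (γ j)⁻¹
    else if (a = uE j ∧ b = vE j) ∨ (a = vE j ∧ b = uE j) then -1
    else 0)

/-- The magnetic operator `H(Γ^α_mag)`: the entries of `H(Γ)` at `(uE j, vE j)` and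
`(vE j, uE j)` (equal to `-1`) are replaced by `-exp(i α j)` and `-exp(-i α j)`. -/
noncomputable def schrodMag {N β : ℕ} (G : SimpleGraph (Fin N)) [DecidableRel G.Adj]
    (q : Fin N → ℝ) (uE vE : Fin β → Fin N) (α : Fin β → ℝ) :
    Matrix (Fin N) (Fin N) ℂ :=
  (schrodOp G q).map (fun x => (x : ℂ)) + ∑ j : Fin β, Matrix.of (fun a b =>
    if a = uE j ∧ b = vE j then 1 - Complex.exp (Complex.I * (α j : ℝ))
    else if a = vE j ∧ b = uE j then 1 - Complex.exp (-(Complex.I * (α j : ℝ)))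
    else 0)

/-- The number of sign changes ("zeros") of a vertex function `f`: the number of edges of `G`
at whose endpoints `f` has different signs. -/
noncomputable def signChanges {N : ℕ} (G : SimpleGraph (Fin N)) (f : Fin N → ℝ) : ℕ :=
  {e : Sym2 (Fin N) | e ∈ G.edgeSet ∧ ∀ u v : Fin N, e = s(u, v) → f u * f v < 0}.ncard

/-- The Hessian matrix of second partial derivatives of `f : ℝ^k → ℝ` at `x₀`, and the number
of its negative eigenvalues (the Morse index of a critical point). -/
noncomputable def hessMat {k : ℕ} (f : (Fin k → ℝ) → ℝ) (x₀ : Fin k → ℝ) :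
    Matrix (Fin k) (Fin k) ℝ :=
  Matrix.of fun i j => fderiv ℝ (fun x => fderiv ℝ f x (Pi.single j 1)) x₀ (Pi.single i 1)

noncomputable def negEigCount {k : ℕ} (M : Matrix (Fin k) (Fin k) ℝ) : ℕ :=
  {i : Fin k | sortedEigs M i < 0}.ncard


lemma sortedEigs_mono {d : ℕ} (M : Matrix (Fin d) (Fin d) ℝ) : Monotone (sortedEigs M) := by
  unfold sortedEigs
  split_ifs with h
  · exact Tuple.monotone_sort _
  · intro a b _; simp

lemma spec {d : ℕ} (M : Matrix (Fin d) (Fin d) ℝ) (h : M.IsHermitian) :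
    ∃ v : Fin d → Fin d → ℝ, (∀ i, M *ᵥ v i = sortedEigs M i • v i) ∧
      (∀ i j, v i ⬝ᵥ v j = if i = j then 1 else 0) ∧
      (∀ x, x = ∑ i, (v i ⬝ᵥ x) • v i) := by
  have hs : sortedEigs M = h.eigenvalues ∘ Tuple.sort h.eigenvalues := by
    unfold sortedEigs; rw [dif_pos h]
  let b := h.eigenvectorBasis.reindex (Tuple.sort h.eigenvalues).symm
  refine ⟨fun i => (b i).ofLp, ?_, ?_, ?_⟩
  · intro i
    rw [hs]
    simpa [b] using h.mulVec_eigenvectorBasis (Tuple.sort h.eigenvalues i)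
  · intro i j
    have := (orthonormal_iff_ite.mp b.orthonormal) j i
    simp only [EuclideanSpace.inner_eq_star_dotProduct, star_trivial] at this
    rw [this]; simp [eq_comm]
  · intro x
    have := b.sum_repr' (WithLp.toLp 2 x)
    have h2 := congrArg WithLp.ofLp this
    simp only [EuclideanSpace.inner_eq_star_dotProduct, star_trivial, WithLp.ofLp_sum, WithLp.ofLp_smul] at h2
    conv_lhs => rw [← h2]
    exact Finset.sum_congr rfl fun i _ => by rw [dotProduct_comm]

lemma spec' {d : ℕ} (M : Matrix (Fin d) (Fin d) ℝ) (h : M.IsHermitian) :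
    ∃ v : Fin d → Fin d → ℝ, (∀ i, M *ᵥ v i = sortedEigs M i • v i) ∧
      (∀ i j, v i ⬝ᵥ v j = if i = j then 1 else 0) ∧
      (∀ x, x = ∑ i, (v i ⬝ᵥ x) • v i) ∧ (∀ x, x ⬝ᵥ x = ∑ i, (v i ⬝ᵥ x)^2) ∧
      (∀ x, x ⬝ᵥ M *ᵥ x = ∑ i, sortedEigs M i * (v i ⬝ᵥ x)^2) := by
  obtain ⟨v, h1, h2, h3⟩ := spec M h
  refine ⟨v, h1, h2, h3, ?_, ?_⟩
  · intro x
    conv_lhs => arg 2; rw [h3 x]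
    rw [dotProduct_sum]
    refine Finset.sum_congr rfl fun i _ => ?_
    rw [dotProduct_smul, dotProduct_comm x, smul_eq_mul]; ring
  · intro x
    conv_lhs => arg 2; rw [h3 x]
    rw [mulVec_sum, dotProduct_sum]
    refine Finset.sum_congr rfl fun i _ => ?_
    rw [mulVec_smul, h1, dotProduct_smul, dotProduct_smul, dotProduct_comm x, smul_eq_mul, smul_eq_mul]; ring

lemma ker_dim {V ι : Type*} [AddCommGroup V] [Module ℝ V] [FiniteDimensional ℝ V] [Fintype ι]
    (L : V →ₗ[ℝ] (ι → ℝ)) :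
    Module.finrank ℝ V ≤ Fintype.card ι + Module.finrank ℝ (LinearMap.ker L) := by
  have := L.finrank_range_add_finrank_ker
  have h2 := Submodule.finrank_le (LinearMap.range L)
  rw [Module.finrank_fintype_fun_eq_card] at h2
  omega

lemma exists_common {V : Type*} [AddCommGroup V] [Module ℝ V] [FiniteDimensional ℝ V]
    (W U : Submodule ℝ V) (h : Module.finrank ℝ V < Module.finrank ℝ W + Module.finrank ℝ U) :
    ∃ x, x ∈ W ∧ x ∈ U ∧ x ≠ 0 := by
  have h1 := Submodule.finrank_sup_add_finrank_inf_eq W U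
  have h2 := Submodule.finrank_le (W ⊔ U)
  have h3 : W ⊓ U ≠ ⊥ := by
    intro h0
    rw [h0, finrank_bot] at h1
    omega
  obtain ⟨x, hx, hx0⟩ := Submodule.exists_mem_ne_zero_of_ne_bot h3
  exact ⟨x, hx.1, hx.2, hx0⟩

/-- subspace orthogonal to a finite family indexed by a predicate -/
lemma orth_dim {d : ℕ} (v : Fin d → Fin d → ℝ) (P : Fin d → Prop) [DecidablePred P] :
    ∃ U : Submodule ℝ (Fin d → ℝ), d ≤ (Finset.univ.filter P).card + Module.finrank ℝ U ∧
      ∀ x ∈ U, ∀ i, P i → v i ⬝ᵥ x = 0 := by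
  let L : (Fin d → ℝ) →ₗ[ℝ] ({i // P i} → ℝ) :=
    LinearMap.pi fun i => dotProductBilin ℝ ℝ (v i.1)
  refine ⟨LinearMap.ker L, ?_, ?_⟩
  · have := ker_dim L
    rw [Module.finrank_fintype_fun_eq_card, Fintype.card_fin, Fintype.card_subtype] at this
    exact this
  · intro x hx i hi
    have := congrFun (LinearMap.mem_ker.mp hx) ⟨i, hi⟩
    simpa [L] using this

lemma dim_lt {d : ℕ} (M : Matrix (Fin d) (Fin d) ℝ) (h : M.IsHermitian) (c : ℝ)
    (W : Submodule ℝ (Fin d → ℝ)) (i : Fin d) (hi : (i : ℕ) < Module.finrank ℝ W)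
    (hW : ∀ x ∈ W, x ≠ 0 → x ⬝ᵥ M *ᵥ x < c * (x ⬝ᵥ x)) : sortedEigs M i < c := by
  obtain ⟨v, h1, h2, h3, h4, h5⟩ := spec' M h
  obtain ⟨U, hU, hU'⟩ := orth_dim v (fun j => j < i)
  have hc : (Finset.univ.filter (fun j : Fin d => j < i)).card = i := by
    rw [Finset.filter_gt_eq_Iio]; simp
  rw [hc] at hU
  obtain ⟨x, hxW, hxU, hx0⟩ := exists_common W U (by simp; omega)
  have hx := hW x hxW hx0
  by_contra hcon
  push Not at hcon
  rw [h4, h5, Finset.mul_sum] at hx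
  refine absurd hx (not_lt.mpr (Finset.sum_le_sum fun j _ => ?_))
  by_cases hj : j < i
  · rw [hU' x hxU j hj]; simp
  · exact mul_le_mul_of_nonneg_right (hcon.trans (sortedEigs_mono M (not_lt.mp hj))) (sq_nonneg _)

lemma dim_gt {d : ℕ} (M : Matrix (Fin d) (Fin d) ℝ) (h : M.IsHermitian) (c : ℝ)
    (W : Submodule ℝ (Fin d → ℝ)) (i : Fin d) (hi : d ≤ i + Module.finrank ℝ W)
    (hW : ∀ x ∈ W, x ≠ 0 → c * (x ⬝ᵥ x) < x ⬝ᵥ M *ᵥ x) : c < sortedEigs M i := by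
  obtain ⟨v, h1, h2, h3, h4, h5⟩ := spec' M h
  obtain ⟨U, hU, hU'⟩ := orth_dim v (fun j => i < j)
  have hc : (Finset.univ.filter (fun j : Fin d => i < j)).card = d - 1 - i := by
    rw [Finset.filter_lt_eq_Ioi]; simp
  rw [hc] at hU
  obtain ⟨x, hxW, hxU, hx0⟩ := exists_common W U (by simp; omega)
  have hx := hW x hxW hx0
  by_contra hcon
  push Not at hcon
  rw [h4, h5, Finset.mul_sum] at hx
  refine absurd hx (not_lt.mpr (Finset.sum_le_sum fun j _ => ?_))
  by_cases hj : i < j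
  · rw [hU' x hxU j hj]; simp
  · exact mul_le_mul_of_nonneg_right ((sortedEigs_mono M (not_lt.mp hj)).trans hcon) (sq_nonneg _)

lemma weyl {d : ℕ} (A B : Matrix (Fin d) (Fin d) ℝ) (hA : A.IsHermitian) (hB : B.IsHermitian)
    (c : ℝ) (h : ∀ x, x ⬝ᵥ B *ᵥ x ≤ x ⬝ᵥ A *ᵥ x + c * (x ⬝ᵥ x)) (i : Fin d) :
    sortedEigs B i ≤ sortedEigs A i + c := by
  refine le_of_forall_pos_lt_add fun ε hε => ?_
  obtain ⟨v, h1, h2, h3, h4, h5⟩ := spec' A hA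
  obtain ⟨U, hU, hU'⟩ := orth_dim v (fun j => i < j)
  have hc : (Finset.univ.filter (fun j : Fin d => i < j)).card = d - 1 - i := by
    rw [Finset.filter_lt_eq_Ioi]; simp
  rw [hc] at hU
  refine dim_lt B hB _ U i (by omega) fun x hx hx0 => ?_
  have hpos : 0 < x ⬝ᵥ x := by
    have := dotProduct_self_star_pos_iff.mpr hx0
    simpa using this
  have : x ⬝ᵥ A *ᵥ x ≤ sortedEigs A i * (x ⬝ᵥ x) := by
    rw [h4, h5, Finset.mul_sum]
    refine Finset.sum_le_sum fun j _ => ?_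
    by_cases hj : i < j
    · rw [hU' x hx j hj]; simp
    · exact mul_le_mul_of_nonneg_right (sortedEigs_mono A (not_lt.mp hj)) (sq_nonneg _)
  nlinarith [h x]

lemma form_bound {d : ℕ} (E : Matrix (Fin d) (Fin d) ℝ) (x : Fin d → ℝ) :
    x ⬝ᵥ E *ᵥ x ≤ (∑ i, ∑ j, |E i j|) * (x ⬝ᵥ x) := by
  have e1 : x ⬝ᵥ E *ᵥ x = ∑ i, ∑ j, x i * (E i j * x j) := by
    simp only [dotProduct, mulVec, Finset.mul_sum]
  rw [e1, Finset.sum_mul]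
  refine Finset.sum_le_sum fun i _ => ?_
  rw [Finset.sum_mul]
  refine Finset.sum_le_sum fun j _ => ?_
  rw [dotProduct]
  have hb : ∀ k, x k * x k ≤ ∑ l, x l * x l := fun k =>
    Finset.single_le_sum (f := fun l => x l * x l) (fun l _ => mul_self_nonneg _) (Finset.mem_univ k)
  have h1 : x i * (E i j * x j) ≤ |E i j| * (|x i| * |x j|) := by
    calc _ ≤ |x i * (E i j * x j)| := le_abs_self _
      _ = _ := by rw [abs_mul, abs_mul]; ring
  refine h1.trans (mul_le_mul_of_nonneg_left ?_ (abs_nonneg _))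
  nlinarith [hb i, hb j, sq_nonneg (|x i| - |x j|), abs_mul_abs_self (x i), abs_mul_abs_self (x j)]

open Filter Topology in
lemma sortedEigs_cont {d : ℕ} {X : Type*} [TopologicalSpace X] (A : X → Matrix (Fin d) (Fin d) ℝ)
    (x₀ : X) (hA : ∀ x, (A x).IsHermitian) (hc : ∀ i j, ContinuousAt (fun x => A x i j) x₀)
    (i : Fin d) : ContinuousAt (fun x => sortedEigs (A x) i) x₀ := by
  have key : ∀ x y, sortedEigs (A x) i ≤ sortedEigs (A y) i + ∑ k, ∑ l, |A x k l - A y k l| := by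
    intro x y
    refine weyl _ _ (hA y) (hA x) _ (fun z => ?_) i
    have := form_bound (A x - A y) z
    rw [sub_mulVec, dotProduct_sub] at this
    simp only [Matrix.sub_apply] at this
    linarith
  have ht : Tendsto (fun x => ∑ k, ∑ l, |A x k l - A x₀ k l|) (𝓝 x₀) (𝓝 0) := by
    have : Tendsto (fun x => ∑ k, ∑ l, |A x k l - A x₀ k l|) (𝓝 x₀)
        (𝓝 (∑ k : Fin d, ∑ l : Fin d, |A x₀ k l - A x₀ k l|)) := by
      refine tendsto_finsetSum _ fun k _ => tendsto_finsetSum _ fun l _ => ?_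
      exact ((hc k l).tendsto.sub_const _).abs
    simpa using this
  rw [ContinuousAt, tendsto_iff_dist_tendsto_zero]
  refine squeeze_zero (fun _ => dist_nonneg) (fun x => ?_) ht
  rw [Real.dist_eq, abs_le]
  have h1 := key x x₀
  have h2 := key x₀ x
  simp only [abs_sub_comm (A x₀ _ _)] at h2
  constructor <;> linarith

lemma eig_exists {d : ℕ} (M : Matrix (Fin d) (Fin d) ℝ) (h : M.IsHermitian) (c : ℝ)
    (x : Fin d → ℝ) (hx : x ≠ 0) (he : M *ᵥ x = c • x) : ∃ i, sortedEigs M i = c := by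
  obtain ⟨v, h1, h2, h3⟩ := spec M h
  by_contra hcon
  push Not at hcon
  apply hx
  rw [h3 x]
  refine Finset.sum_eq_zero fun i _ => ?_
  have e1 : v i ⬝ᵥ M *ᵥ x = sortedEigs M i * (v i ⬝ᵥ x) := by
    rw [dotProduct_mulVec, ← mulVec_transpose, ← conjTranspose_eq_transpose_of_trivial, h.eq, h1, smul_dotProduct, smul_eq_mul]
  rw [he, dotProduct_smul, smul_eq_mul] at e1
  have : v i ⬝ᵥ x = 0 := by
    have : (sortedEigs M i - c) * (v i ⬝ᵥ x) = 0 := by linarith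
    exact (mul_eq_zero.mp this).resolve_left (sub_ne_zero.mpr (hcon i))
  rw [this, zero_smul]

/-- `Q` has negative index `k` on `V`. -/
def HasIdx {V : Type*} [AddCommGroup V] [Module ℝ V] (Q : V → ℝ) (k : ℕ) : Prop :=
  ∃ W U : Submodule ℝ V, k ≤ Module.finrank ℝ W ∧ Module.finrank ℝ V ≤ k + Module.finrank ℝ U ∧
    (∀ x ∈ W, x ≠ 0 → Q x < 0) ∧ (∀ x ∈ U, 0 ≤ Q x)

lemma HasIdx.le {V : Type*} [AddCommGroup V] [Module ℝ V] [FiniteDimensional ℝ V] {Q : V → ℝ}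
    {k l : ℕ} (h : HasIdx Q k) (h' : HasIdx Q l) : k ≤ l := by
  obtain ⟨W, -, h1, -, h2, -⟩ := h
  obtain ⟨-, U, -, h3, -, h4⟩ := h'
  by_contra hc
  obtain ⟨x, hx, hy, h0⟩ := exists_common W U (by omega)
  exact absurd (h2 x hx h0) (not_lt.mpr (h4 x hy))

lemma HasIdx.unique {V : Type*} [AddCommGroup V] [Module ℝ V] [FiniteDimensional ℝ V] {Q : V → ℝ}
    {k l : ℕ} (h : HasIdx Q k) (h' : HasIdx Q l) : k = l := le_antisymm (h.le h') (h'.le h)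

lemma HasIdx.equiv {V V' : Type*} [AddCommGroup V] [Module ℝ V] [AddCommGroup V'] [Module ℝ V']
    {Q : V → ℝ} {Q' : V' → ℝ} {k : ℕ} (h : HasIdx Q k) (e : V ≃ₗ[ℝ] V')
    (he : ∀ x, Q' (e x) = Q x) : HasIdx Q' k := by
  obtain ⟨W, U, h1, h2, h3, h4⟩ := h
  refine ⟨W.map (e : V →ₗ[ℝ] V'), U.map (e : V →ₗ[ℝ] V'), ?_, ?_, ?_, ?_⟩
  · rw [LinearEquiv.finrank_map_eq]; exact h1
  · rw [LinearEquiv.finrank_map_eq, ← e.finrank_eq]; exact h2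
  · rintro _ ⟨x, hx, rfl⟩ h0
    simp only [LinearEquiv.coe_coe] at h0 ⊢
    rw [he]
    exact h3 x hx (by rintro rfl; simp at h0)
  · rintro _ ⟨x, hx, rfl⟩
    simp only [LinearEquiv.coe_coe]
    rw [he]; exact h4 x hx

lemma HasIdx.prod {V V' : Type*} [AddCommGroup V] [Module ℝ V] [AddCommGroup V'] [Module ℝ V']
    [FiniteDimensional ℝ V] [FiniteDimensional ℝ V']
    {Q : V → ℝ} {Q' : V' → ℝ} {k l : ℕ} (h : HasIdx Q k) (h' : HasIdx Q' l) 
    (hQ : Q 0 = 0) (hQ' : Q' 0 = 0) :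
    HasIdx (fun x : V × V' => Q x.1 + Q' x.2) (k + l) := by
  obtain ⟨W, U, h1, h2, h3, h4⟩ := h
  obtain ⟨W', U', h1', h2', h3', h4'⟩ := h'
  have hd : ∀ (A : Submodule ℝ V) (B : Submodule ℝ V'), Module.finrank ℝ (A.prod B) =
      Module.finrank ℝ A + Module.finrank ℝ B := by
    intro A B
    let L := A.subtype.prodMap B.subtype
    have hL : Function.Injective L := by
      rintro ⟨a, b⟩ ⟨a', b'⟩ hab
      simpa [L] using hab
    have hr : LinearMap.range L = A.prod B := by
      simp only [L, LinearMap.range_prodMap, Submodule.range_subtype]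
    rw [← Module.finrank_prod, ← LinearMap.finrank_range_of_inj hL, hr]
  refine ⟨W.prod W', U.prod U', ?_, ?_, ?_, ?_⟩
  · rw [hd]; omega
  · rw [hd, Module.finrank_prod]; omega
  · rintro ⟨x, y⟩ ⟨hx, hy⟩ h0
    simp only at hx hy ⊢
    by_cases hx0 : x = 0
    · have hy0 : y ≠ 0 := by rintro rfl; exact h0 (by rw [hx0]; rfl)
      rw [hx0, hQ]; linarith [h3' y hy hy0]
    · have := h3 x hx hx0
      by_cases hy0 : y = 0
      · rw [hy0, hQ']; linarith
      · linarith [h3' y hy hy0]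
  · rintro ⟨x, y⟩ ⟨hx, hy⟩
    exact add_nonneg (h4 x hx) (h4' y hy)

lemma idx_matrix {d : ℕ} (M : Matrix (Fin d) (Fin d) ℝ) (h : M.IsHermitian) (c : ℝ) :
    HasIdx (fun x : Fin d → ℝ => x ⬝ᵥ M *ᵥ x - c * (x ⬝ᵥ x)) {i | sortedEigs M i < c}.ncard := by
  classical
  obtain ⟨v, h1, h2, h3, h4, h5⟩ := spec' M h
  obtain ⟨W, hW, hW'⟩ := orth_dim v (fun j => ¬ (sortedEigs M j < c))
  obtain ⟨U, hU, hU'⟩ := orth_dim v (fun j => (sortedEigs M j < c))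
  have hc : {i | sortedEigs M i < c}.ncard = (Finset.univ.filter fun j => sortedEigs M j < c).card := by
    rw [← Set.ncard_coe_finset]; simp
  have hs : (Finset.univ.filter fun j => sortedEigs M j < c).card + (Finset.univ.filter fun j => ¬ sortedEigs M j < c).card = d := by
    rw [Finset.card_filter_add_card_filter_not]; simp
  refine ⟨W, U, by omega, by simp; omega, ?_, ?_⟩
  · intro x hx hx0
    have hne : ∃ i, v i ⬝ᵥ x ≠ 0 := by
      by_contra hcon
      push Not at hcon
      apply hx0; rw [h3 x]; simp [hcon]
    obtain ⟨i, hi⟩ := hne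
    simp only
    rw [h4, h5, Finset.mul_sum, sub_neg]
    refine Finset.sum_lt_sum (fun j _ => ?_) ⟨i, Finset.mem_univ _, ?_⟩
    · by_cases hj : sortedEigs M j < c
      · exact mul_le_mul_of_nonneg_right hj.le (sq_nonneg _)
      · rw [hW' x hx j hj]; simp
    · by_cases hj : sortedEigs M i < c
      · exact mul_lt_mul_of_pos_right hj (by positivity)
      · exact absurd (hW' x hx i hj) hi
  · intro x hx
    simp only
    rw [h4, h5, Finset.mul_sum, sub_nonneg]
    refine Finset.sum_le_sum (fun j _ => ?_)
    by_cases hj : sortedEigs M j < c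
    · rw [hU' x hx j hj]; simp
    · exact mul_le_mul_of_nonneg_right (not_lt.mp hj) (sq_nonneg _)

lemma idx_diag {d : ℕ} (w : Fin d → ℝ) :
    HasIdx (fun x : Fin d → ℝ => - ∑ i, w i * (x i)^2) {i | 0 < w i}.ncard := by
  classical
  obtain ⟨W, hW, hW'⟩ := orth_dim (fun i => Pi.single i 1) (fun j => ¬ (0 < w j))
  obtain ⟨U, hU, hU'⟩ := orth_dim (fun i => Pi.single i 1) (fun j => (0 < w j))
  simp only [single_one_dotProduct] at hW' hU'
  have hc : {i | 0 < w i}.ncard = (Finset.univ.filter fun j => 0 < w j).card := by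
    rw [← Set.ncard_coe_finset]; simp
  have hs : (Finset.univ.filter fun j => 0 < w j).card + (Finset.univ.filter fun j => ¬ 0 < w j).card = d := by
    rw [Finset.card_filter_add_card_filter_not]; simp
  refine ⟨W, U, by omega, by simp; omega, ?_, ?_⟩
  · intro x hx hx0
    obtain ⟨i, hi⟩ := Function.ne_iff.mp hx0
    simp only
    rw [neg_lt_zero]
    refine Finset.sum_pos' (fun j _ => ?_) ⟨i, Finset.mem_univ _, ?_⟩
    · by_cases hj : 0 < w j
      · positivity
      · rw [hW' x hx j hj]; simp
    · by_cases hj : 0 < w i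
      · have : x i ≠ 0 := hi
        positivity
      · exact absurd (hW' x hx i hj) hi
  · intro x hx
    simp only
    rw [neg_nonneg]
    refine Finset.sum_nonpos (fun j _ => ?_)
    by_cases hj : 0 < w j
    · rw [hU' x hx j hj]; simp
    · exact mul_nonpos_of_nonpos_of_nonneg (not_lt.mp hj) (sq_nonneg _)

open Filter Topology in
lemma hess_lemma {k : ℕ} (F : (Fin k → ℝ) → ℝ) (x₀ : Fin k → ℝ) (c : ℝ)
    (h : Fin k → (Fin k → ℝ) → ℝ) (hh : ∀ j, ContDiffAt ℝ 2 (h j) x₀) (h0 : ∀ j, h j x₀ = 0)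
    (hF : F =ᶠ[𝓝 x₀] fun x => c + ∑ j, (x j - x₀ j) * h j x) :
    fderiv ℝ F x₀ = 0 ∧ ∀ i j, hessMat F x₀ i j =
      fderiv ℝ (h j) x₀ (Pi.single i 1) + fderiv ℝ (h i) x₀ (Pi.single j 1) := by
  have hd : ∀ᶠ x in 𝓝 x₀, ∀ v, fderiv ℝ F x v =
      ∑ j, (v j * h j x + (x j - x₀ j) * fderiv ℝ (h j) x v) := by
    have e1 : ∀ᶠ x in 𝓝 x₀, ∀ j, DifferentiableAt ℝ (h j) x := by
      rw [eventually_all]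
      intro j
      filter_upwards [(hh j).eventually (by simp)] with x hx
      exact hx.differentiableAt (by simp)
    filter_upwards [e1, hF.eventually_nhds] with x hx hFx v
    rw [Filter.EventuallyEq.fderiv_eq hFx]
    have hder : HasFDerivAt (fun x => c + ∑ j, (x j - x₀ j) * h j x)
        (∑ j, ((x j - x₀ j) • fderiv ℝ (h j) x + h j x • ContinuousLinearMap.proj (R := ℝ) (φ := fun _ : Fin k => ℝ) j)) x := by
      refine HasFDerivAt.const_add _ (HasFDerivAt.fun_sum fun j _ => ?_)
      exact ((hasFDerivAt_apply j x).sub_const _).mul (hx j).hasFDerivAt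
    rw [hder.fderiv]
    simp only [_root_.sum_apply, _root_.add_apply, _root_.smul_apply, ContinuousLinearMap.proj_apply, smul_eq_mul]
    exact Finset.sum_congr rfl fun j _ => by ring
  constructor
  · ext1 v
    rw [hd.self_of_nhds]
    simp [h0]
  · intro i j
    have e2 : (fun x => fderiv ℝ F x (Pi.single j 1)) =ᶠ[𝓝 x₀]
        fun x => ∑ l, ((Pi.single j 1 : Fin k → ℝ) l * h l x + (x l - x₀ l) * fderiv ℝ (h l) x (Pi.single j 1)) := by
      filter_upwards [hd] with x hx using hx _
    have hder : HasFDerivAt (fun x => ∑ l, ((Pi.single j 1 : Fin k → ℝ) l * h l x + (x l - x₀ l) * fderiv ℝ (h l) x (Pi.single j 1)))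
        (∑ l, ((Pi.single j 1 : Fin k → ℝ) l • fderiv ℝ (h l) x₀ + ((x₀ l - x₀ l) • fderiv ℝ (fun x => fderiv ℝ (h l) x (Pi.single j 1)) x₀ + (fderiv ℝ (h l) x₀ (Pi.single j 1)) • ContinuousLinearMap.proj (R := ℝ) (φ := fun _ : Fin k => ℝ) l))) x₀ := by
      refine HasFDerivAt.fun_sum fun l _ => ?_
      refine HasFDerivAt.add (((hh l).differentiableAt (by simp)).hasFDerivAt.const_mul _) ?_
      refine ((hasFDerivAt_apply l x₀).sub_const _).mul (DifferentiableAt.hasFDerivAt ?_)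
      have : ContDiffAt ℝ 1 (fderiv ℝ (h l)) x₀ := (hh l).fderiv_right (by norm_num)
      exact (this.differentiableAt (by simp)).clm_apply (differentiableAt_const _)
    rw [hessMat, Matrix.of_apply, e2.fderiv_eq, hder.fderiv]
    simp only [_root_.sum_apply, _root_.add_apply, _root_.smul_apply, ContinuousLinearMap.proj_apply, smul_eq_mul, sub_self, zero_mul, Finset.sum_add_distrib]
    simp [Pi.single_apply]

open Filter Topology in
lemma implicit_eig {k N : ℕ} (A : (Fin k → ℝ) → Matrix (Fin N) (Fin N) ℝ) (x₀ : Fin k → ℝ)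
    (f : Fin N → ℝ) (lam : ℝ) (hA : ∀ i j, ContDiffAt ℝ 2 (fun x => A x i j) x₀)
    (hsym : (A x₀).IsHermitian) (hf : A x₀ *ᵥ f = lam • f) (hff : f ⬝ᵥ f ≠ 0)
    (hker : ∀ y, A x₀ *ᵥ y = lam • y → y ⬝ᵥ f = 0 → y = 0) :
    ∃ (x : (Fin k → ℝ) → Fin N → ℝ) (μ : (Fin k → ℝ) → ℝ),
      ContDiffAt ℝ 2 x x₀ ∧ ContDiffAt ℝ 2 μ x₀ ∧ x x₀ = f ∧ μ x₀ = lam ∧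
      ∀ᶠ γ in 𝓝 x₀, A γ *ᵥ x γ = μ γ • x γ ∧ x γ ⬝ᵥ f = f ⬝ᵥ f := by
  let F : (Fin k → ℝ) × ((Fin N → ℝ) × ℝ) → (Fin N → ℝ) × ℝ :=
    fun p => (A p.1 *ᵥ p.2.1 - p.2.2 • p.2.1, p.2.1 ⬝ᵥ f)
  let u : (Fin k → ℝ) × ((Fin N → ℝ) × ℝ) := (x₀, (f, lam))
  have cd : ContDiffAt ℝ 2 F u := by
    refine ContDiffAt.prodMk (ContDiffAt.sub ?_ ?_) ?_
    · rw [contDiffAt_pi]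
      intro a
      simp only [mulVec, dotProduct]
      refine ContDiffAt.sum fun b _ => ContDiffAt.mul ?_ ?_
      · exact ContDiffAt.comp (x := u) (g := fun x => A x a b) (f := Prod.fst) (hA a b) contDiffAt_fst
      · fun_prop
    · fun_prop
    · simp only [dotProduct]
      fun_prop
  have hL : ∀ y m, (fderiv ℝ F u ∘L .inr ℝ (Fin k → ℝ) ((Fin N → ℝ) × ℝ)) (y, m) =
      (A x₀ *ᵥ y - (lam • y + m • f), y ⬝ᵥ f) := by
    intro y m
    have h1 : HasFDerivAt (fun z : (Fin N → ℝ) × ℝ => F (x₀, z))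
        (fderiv ℝ F u ∘L .inr ℝ (Fin k → ℝ) ((Fin N → ℝ) × ℝ)) (f, lam) :=
      HasFDerivAt.comp (f, lam) (cd.differentiableAt (by simp)).hasFDerivAt (hasFDerivAt_prodMk_right x₀ (f, lam))
    let L1 : (Fin N → ℝ) →L[ℝ] (Fin N → ℝ) := LinearMap.toContinuousLinearMap (A x₀).mulVecLin
    let L2 : (Fin N → ℝ) →L[ℝ] ℝ := LinearMap.toContinuousLinearMap (dotProductBilin ℝ ℝ f)
    have h2 : HasFDerivAt (fun z : (Fin N → ℝ) × ℝ => F (x₀, z))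
        ((L1.comp (ContinuousLinearMap.fst ℝ _ _) - (lam • ContinuousLinearMap.fst ℝ _ _ +
          (ContinuousLinearMap.snd ℝ (Fin N → ℝ) ℝ).smulRight f)).prod (L2.comp (ContinuousLinearMap.fst ℝ _ _))) (f, lam) := by
      have h3 := ((L1.comp (ContinuousLinearMap.fst ℝ (Fin N → ℝ) ℝ)).hasFDerivAt (x := (f, lam))).sub
        ((hasFDerivAt_snd (𝕜 := ℝ) (p := (f, lam))).smul (hasFDerivAt_fst (𝕜 := ℝ) (p := (f, lam))))
      have h4 := h3.prodMk ((L2.comp (ContinuousLinearMap.fst ℝ (Fin N → ℝ) ℝ)).hasFDerivAt (x := (f, lam)))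
      refine h4.congr_of_eventuallyEq (Eventually.of_forall fun z => ?_)
      simp [F, L1, L2, dotProduct_comm]
    rw [h1.unique h2]
    simp [L1, L2, dotProduct_comm]
  have hinv : (fderiv ℝ F u ∘L .inr ℝ (Fin k → ℝ) ((Fin N → ℝ) × ℝ)).IsInvertible := by
    set L := fderiv ℝ F u ∘L .inr ℝ (Fin k → ℝ) ((Fin N → ℝ) × ℝ) with hLdef
    have hinj : Function.Injective (L : ((Fin N → ℝ) × ℝ) →ₗ[ℝ] ((Fin N → ℝ) × ℝ)) := by
      rw [injective_iff_map_eq_zero]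
      rintro ⟨y, m⟩ h0
      have h0' : L (y, m) = 0 := h0
      rw [hL] at h0'
      obtain ⟨h1, h2⟩ := Prod.mk.inj h0'
      have h3 : A x₀ *ᵥ y = lam • y + m • f := sub_eq_zero.mp h1
      have h4 : f ⬝ᵥ A x₀ *ᵥ y = lam * (f ⬝ᵥ y) := by
        rw [dotProduct_mulVec, ← mulVec_transpose, ← conjTranspose_eq_transpose_of_trivial, hsym.eq, hf, smul_dotProduct, smul_eq_mul]
      rw [h3, dotProduct_add, dotProduct_smul, dotProduct_smul, smul_eq_mul, smul_eq_mul] at h4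
      have h5 : m * (f ⬝ᵥ f) = 0 := by linarith
      have h6 : m = 0 := (mul_eq_zero.mp h5).resolve_right hff
      rw [h6, zero_smul, add_zero] at h3
      rw [hker y h3 h2, h6]; rfl
    let e := (LinearEquiv.ofInjectiveEndo _ hinj).toContinuousLinearEquiv
    exact ⟨e, ContinuousLinearMap.ext fun z => rfl⟩
  let ψ := cd.implicitFunction (by simp) hinv
  have hψ : ContDiffAt ℝ 2 ψ x₀ := cd.contDiffAt_implicitFunction (by simp) hinv
  have hψ0 : ψ x₀ = (f, lam) := cd.implicitFunction_apply_self (by simp) hinv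
  have hev := cd.eventually_apply_implicitFunction (by simp) hinv
  refine ⟨fun γ => (ψ γ).1, fun γ => (ψ γ).2, hψ.fst, hψ.snd, by simp only [hψ0], by simp only [hψ0], ?_⟩
  filter_upwards [hev] with γ hγ
  obtain ⟨h1, h2⟩ := Prod.mk.inj hγ
  refine ⟨?_, h2⟩
  simp only [u, hf, sub_self] at h1
  exact sub_eq_zero.mp h1

lemma ncard_lt {N k : ℕ} (hk : k ≤ N) : {i : Fin N | (i : ℕ) < k}.ncard = k := by
  have : {i : Fin N | (i : ℕ) < k} = Set.range (Fin.castLE hk) := by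
    ext i; simp only [Set.mem_ofPred_eq, Fin.range_castLE]
  rw [this, ← Set.image_univ, Set.ncard_image_of_injective _ (Fin.castLE_injective hk)]
  simp

lemma symm_form {N : ℕ} (M : Matrix (Fin N) (Fin N) ℝ) (hM : M.IsHermitian) (f y : Fin N → ℝ)
    (lam : ℝ) (hf : M *ᵥ f = lam • f) :
    (fun a => f a * y a) ⬝ᵥ M *ᵥ (fun a => f a * y a) - lam * ((fun a => f a * y a) ⬝ᵥ (fun a => f a * y a)) =
      - (1 / 2) * ∑ a, ∑ b, M a b * (f a * f b) * (y a - y b)^2 := by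
  have hs : ∀ a b, M a b = M b a := fun a b => by simpa using hM.apply b a
  have h1 : ∀ a, ∑ b, M a b * f b = lam * f a := fun a => by
    simpa [mulVec, dotProduct] using congrFun hf a
  have e1 : ∑ a, ∑ b, M a b * (f a * f b) * (y a)^2 = lam * ∑ a, (f a * y a) * (f a * y a) := by
    rw [Finset.mul_sum]
    refine Finset.sum_congr rfl fun a _ => ?_
    have := h1 a
    calc _ = (f a * (y a)^2) * ∑ b, M a b * f b := by
            rw [Finset.mul_sum]; exact Finset.sum_congr rfl fun b _ => by ring
      _ = _ := by rw [this]; ring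
  have e2 : ∑ a, ∑ b, M a b * (f a * f b) * (y b)^2 = lam * ∑ a, (f a * y a) * (f a * y a) := by
    rw [Finset.sum_comm, ← e1]
    refine Finset.sum_congr rfl fun a _ => Finset.sum_congr rfl fun b _ => ?_
    rw [hs b a]; ring
  have e3 : (fun a => f a * y a) ⬝ᵥ M *ᵥ (fun a => f a * y a) =
      ∑ a, ∑ b, M a b * (f a * f b) * (y a * y b) := by
    simp only [dotProduct, mulVec, Finset.mul_sum]
    refine Finset.sum_congr rfl fun a _ => Finset.sum_congr rfl fun b _ => ?_
    ring
  have e4 : ∑ a, ∑ b, M a b * (f a * f b) * (y a - y b)^2 =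
      ∑ a, ∑ b, M a b * (f a * f b) * (y a)^2 + ∑ a, ∑ b, M a b * (f a * f b) * (y b)^2
      - 2 * ∑ a, ∑ b, M a b * (f a * f b) * (y a * y b) := by
    simp only [Finset.mul_sum, ← Finset.sum_add_distrib, ← Finset.sum_sub_distrib]
    refine Finset.sum_congr rfl fun a _ => Finset.sum_congr rfl fun b _ => ?_
    ring
  rw [e4, e1, e2, e3]
  simp only [dotProduct]
  ring

lemma conn_const {N : ℕ} (T : SimpleGraph (Fin N)) (hT : T.Connected) (y : Fin N → ℝ)
    (h : ∀ a b, T.Adj a b → y a = y b) (a b : Fin N) : y a = y b := by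
  obtain ⟨w⟩ := hT.preconnected a b
  induction w with
  | nil => rfl
  | cons hadj _ ih => exact (h _ _ hadj).trans ih

lemma edge_space {N : ℕ} (T : SimpleGraph (Fin N)) (f : Fin N → ℝ) (r : Fin N)
    (R : Sym2 (Fin N) → Prop) :
    ∃ W : Submodule ℝ (Fin N → ℝ), N ≤ {e | e ∈ T.edgeSet ∧ R e}.ncard + 1 + Module.finrank ℝ W ∧
      ∀ x ∈ W, x r = 0 ∧ ∀ a b, T.Adj a b → R s(a, b) → x a / f a = x b / f b := by
  classical
  let L : (Fin N → ℝ) →ₗ[ℝ] (Option {e // e ∈ T.edgeSet ∧ R e} → ℝ) :=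
    LinearMap.pi fun o => match o with
      | none => LinearMap.proj r
      | some e => (f (Quot.out e.1).1)⁻¹ • LinearMap.proj (Quot.out e.1).1
          - (f (Quot.out e.1).2)⁻¹ • LinearMap.proj (Quot.out e.1).2
  refine ⟨LinearMap.ker L, ?_, ?_⟩
  · have := ker_dim L
    rw [Module.finrank_fintype_fun_eq_card, Fintype.card_fin, Fintype.card_option] at this
    have h2 : {e | e ∈ T.edgeSet ∧ R e}.ncard = Fintype.card {e // e ∈ T.edgeSet ∧ R e} := by
      rw [← Nat.card_coe_set_eq, ← Nat.card_eq_fintype_card]; rfl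
    rw [h2]; exact this
  · intro x hx
    have hx' := LinearMap.mem_ker.mp hx
    refine ⟨by simpa [L] using congrFun hx' none, fun a b hab hR => ?_⟩
    have h1 := congrFun hx' (some ⟨s(a, b), by simpa using hab, hR⟩)
    simp only [L, LinearMap.pi_apply, LinearMap.sub_apply, LinearMap.smul_apply, LinearMap.proj_apply,
      smul_eq_mul, Pi.zero_apply] at h1
    have h2 : s((Quot.out s(a, b)).1, (Quot.out s(a, b)).2) = s(a, b) := Quot.out_eq _
    rw [Sym2.eq_iff] at h2
    rcases h2 with ⟨h3, h4⟩ | ⟨h3, h4⟩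
    · rw [h3, h4] at h1
      rw [div_eq_inv_mul, div_eq_inv_mul]; linarith
    · rw [h3, h4] at h1
      rw [div_eq_inv_mul, div_eq_inv_mul]; linarith

def negE {N : ℕ} (f : Fin N → ℝ) (e : Sym2 (Fin N)) : Prop :=
  ∀ u v : Fin N, e = s(u, v) → f u * f v < 0

lemma negE_mk {N : ℕ} (f : Fin N → ℝ) (a b : Fin N) : negE f s(a, b) ↔ f a * f b < 0 := by
  constructor
  · intro h; exact h a b rfl
  · intro h u v huv
    rcases Sym2.eq_iff.mp huv with ⟨rfl, rfl⟩ | ⟨rfl, rfl⟩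
    · exact h
    · rwa [mul_comm]

/-- Fiedler's theorem. -/
lemma tree_eigs {N : ℕ} (T : SimpleGraph (Fin N)) (hT : T.IsTree)
    (M : Matrix (Fin N) (Fin N) ℝ) (hM : M.IsHermitian) (f : Fin N → ℝ) (hf0 : ∀ a, f a ≠ 0)
    (lam : ℝ) (hf : M *ᵥ f = lam • f)
    (hMa : ∀ a b, T.Adj a b → M a b = -1) (hMn : ∀ a b, a ≠ b → ¬ T.Adj a b → M a b = 0)
    (k : ℕ) (hk : k = {e | e ∈ T.edgeSet ∧ negE f e}.ncard) :
    ∃ hkN : k < N, (∀ i : Fin N, (i : ℕ) < k → sortedEigs M i < lam) ∧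
      (∀ i : Fin N, k < (i : ℕ) → lam < sortedEigs M i) ∧ sortedEigs M ⟨k, hkN⟩ = lam := by
  classical
  obtain ⟨r⟩ := hT.connected.nonempty
  have hcard : {e | e ∈ T.edgeSet ∧ negE f e}.ncard + {e | e ∈ T.edgeSet ∧ ¬ negE f e}.ncard + 1 = N := by
    have h1 := hT.card_edgeFinset
    rw [Fintype.card_fin] at h1
    refine Eq.trans ?_ h1
    rw [← Set.ncard_union_eq, ← Set.ncard_coe_finset, SimpleGraph.coe_edgeFinset]
    · congr 2; ext e; simp only [Set.mem_union, Set.mem_ofPred_eq]; tauto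
    · rw [Set.disjoint_left]; rintro e ⟨_, h⟩ ⟨_, h'⟩; exact h' h
  have hform : ∀ x : Fin N → ℝ, x ⬝ᵥ M *ᵥ x - lam * (x ⬝ᵥ x) =
      (1 / 2) * ∑ a, ∑ b, if T.Adj a b then (f a * f b) * (x a / f a - x b / f b)^2 else 0 := by
    intro x
    have h1 := symm_form M hM f (fun a => x a / f a) lam hf
    have h2 : (fun a => f a * (x a / f a)) = x := by
      ext a; field_simp [hf0 a]
    simp only [h2] at h1
    rw [h1, neg_mul, ← mul_neg, ← Finset.sum_neg_distrib]
    congr 1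
    refine Finset.sum_congr rfl fun a _ => ?_
    rw [← Finset.sum_neg_distrib]
    refine Finset.sum_congr rfl fun b _ => ?_
    split_ifs with hab
    · rw [hMa a b hab]; ring
    · by_cases h : a = b
      · subst h; simp
      · rw [hMn a b h hab]; simp
  have hzero : ∀ x : Fin N → ℝ, x r = 0 → (∀ a b, T.Adj a b → (f a * f b) * (x a / f a - x b / f b)^2 = 0) → x = 0 := by
    intro x hr h
    have h1 : ∀ a b, T.Adj a b → x a / f a = x b / f b := by
      intro a b hab
      have := h a b hab
      rcases mul_eq_zero.mp this with h2 | h2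
      · exact absurd h2 (mul_ne_zero (hf0 a) (hf0 b))
      · exact sub_eq_zero.mp (pow_eq_zero_iff (two_ne_zero) |>.mp h2)
    ext a
    have h2 := conn_const T hT.connected (fun a => x a / f a) h1 a r
    simp only [hr, zero_div] at h2
    exact (div_eq_zero_iff.mp h2).resolve_right (hf0 a)
  obtain ⟨W, hW, hW'⟩ := edge_space T f r (fun e => ¬ negE f e)
  obtain ⟨U, hU, hU'⟩ := edge_space T f r (negE f)
  have A1 : ∀ i : Fin N, (i : ℕ) < k → sortedEigs M i < lam := by
    intro i hi
    refine dim_lt M hM lam W i (by omega) fun x hx hx0 => ?_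
    obtain ⟨hr, hx1⟩ := hW' x hx
    rw [← sub_neg, hform x]
    have ht : ∀ a b, (if T.Adj a b then (f a * f b) * (x a / f a - x b / f b)^2 else 0) ≤ 0 := by
      intro a b
      split_ifs with hab
      · by_cases hn : f a * f b < 0
        · exact mul_nonpos_of_nonpos_of_nonneg hn.le (sq_nonneg _)
        · rw [hx1 a b hab (by rwa [negE_mk])]; simp
      · exact le_rfl
    by_contra hcon
    push Not at hcon
    have hs : ∑ a, ∑ b, (if T.Adj a b then (f a * f b) * (x a / f a - x b / f b)^2 else 0) = 0 :=
      le_antisymm (Finset.sum_nonpos fun a _ => Finset.sum_nonpos fun b _ => ht a b) (by linarith)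
    apply hx0
    refine hzero x hr fun a b hab => ?_
    have h1 := (Finset.sum_eq_zero_iff_of_nonpos (fun a _ => Finset.sum_nonpos fun b _ => ht a b)).mp hs a (Finset.mem_univ a)
    have h2 := (Finset.sum_eq_zero_iff_of_nonpos (fun b _ => ht a b)).mp h1 b (Finset.mem_univ b)
    rwa [if_pos hab] at h2
  have A2 : ∀ i : Fin N, k < (i : ℕ) → lam < sortedEigs M i := by
    intro i hi
    refine dim_gt M hM lam U i (by omega) fun x hx hx0 => ?_
    obtain ⟨hr, hx1⟩ := hU' x hx
    rw [← sub_pos, hform x]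
    have ht : ∀ a b, 0 ≤ (if T.Adj a b then (f a * f b) * (x a / f a - x b / f b)^2 else 0) := by
      intro a b
      split_ifs with hab
      · by_cases hn : f a * f b < 0
        · rw [hx1 a b hab (by rwa [negE_mk])]; simp
        · exact mul_nonneg (not_lt.mp hn) (sq_nonneg _)
      · exact le_rfl
    by_contra hcon
    push Not at hcon
    have hs : ∑ a, ∑ b, (if T.Adj a b then (f a * f b) * (x a / f a - x b / f b)^2 else 0) = 0 :=
      le_antisymm (by linarith) (Finset.sum_nonneg fun a _ => Finset.sum_nonneg fun b _ => ht a b)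
    apply hx0
    refine hzero x hr fun a b hab => ?_
    have h1 := (Finset.sum_eq_zero_iff_of_nonneg (fun a _ => Finset.sum_nonneg fun b _ => ht a b)).mp hs a (Finset.mem_univ a)
    have h2 := (Finset.sum_eq_zero_iff_of_nonneg (fun b _ => ht a b)).mp h1 b (Finset.mem_univ b)
    rwa [if_pos hab] at h2
  refine ⟨by omega, A1, A2, ?_⟩
  obtain ⟨i, hi⟩ := eig_exists M hM lam f (fun h => hf0 r (congrFun h r)) hf
  have : (i : ℕ) = k := by
    rcases lt_trichotomy (i : ℕ) k with h | h | h
    · exact absurd hi (A1 i h).ne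
    · exact h
    · exact absurd hi (A2 i h).ne'
  rw [← hi]; congr 1; exact Fin.ext this.symm

lemma simple_ker {N : ℕ} (M : Matrix (Fin N) (Fin N) ℝ) (hM : M.IsHermitian) (f : Fin N → ℝ)
    (hff : f ⬝ᵥ f ≠ 0) (lam : ℝ) (hf : M *ᵥ f = lam • f) (k : Fin N)
    (hk : ∀ i, i ≠ k → sortedEigs M i ≠ lam) (y : Fin N → ℝ) (hy : M *ᵥ y = lam • y)
    (hyf : y ⬝ᵥ f = 0) : y = 0 := by
  obtain ⟨v, h1, h2, h3⟩ := spec M hM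
  have key : ∀ x, M *ᵥ x = lam • x → x = (v k ⬝ᵥ x) • v k := by
    intro x hx
    conv_lhs => rw [h3 x]
    refine Finset.sum_eq_single k (fun i _ hi => ?_) (by simp)
    have e1 : v i ⬝ᵥ M *ᵥ x = sortedEigs M i * (v i ⬝ᵥ x) := by
      rw [dotProduct_mulVec, ← mulVec_transpose, ← conjTranspose_eq_transpose_of_trivial, hM.eq, h1, smul_dotProduct, smul_eq_mul]
    rw [hx, dotProduct_smul, smul_eq_mul] at e1
    have : (sortedEigs M i - lam) * (v i ⬝ᵥ x) = 0 := by linarith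
    rw [(mul_eq_zero.mp this).resolve_left (sub_ne_zero.mpr (hk i hi)), zero_smul]
  have hy1 := key y hy
  have hf1 := key f hf
  have hvf : v k ⬝ᵥ f ≠ 0 := by
    intro h; rw [h, zero_smul] at hf1; rw [hf1] at hff; simp at hff
  rw [hy1, smul_dotProduct, smul_eq_mul] at hyf
  rw [hy1, (mul_eq_zero.mp hyf).resolve_right hvf, zero_smul]

lemma count_simple {N : ℕ} (M : Matrix (Fin N) (Fin N) ℝ) (hM : M.IsHermitian) (k : Fin N)
    (h : Module.finrank ℝ (Module.End.eigenspace (Matrix.toLin' M) (sortedEigs M k)) = 1) :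
    {i | sortedEigs M i < sortedEigs M k}.ncard = k := by
  obtain ⟨v, h1, h2, h3⟩ := spec M hM
  have : {i | sortedEigs M i < sortedEigs M k} = {i : Fin N | (i : ℕ) < k} := by
    ext i
    simp only [Set.mem_ofPred_eq]
    constructor
    · intro hi
      by_contra hcon
      exact absurd (sortedEigs_mono M (show k ≤ i from not_lt.mp hcon)) (not_le.mpr hi)
    · intro hi
      refine lt_of_le_of_ne (sortedEigs_mono M (show i ≤ k from le_of_lt hi)) fun heq => ?_
      have mk : v k ∈ Module.End.eigenspace (Matrix.toLin' M) (sortedEigs M k) := by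
        rw [Module.End.mem_eigenspace_iff, toLin'_apply, h1]
      have mi : v i ∈ Module.End.eigenspace (Matrix.toLin' M) (sortedEigs M k) := by
        rw [Module.End.mem_eigenspace_iff, toLin'_apply, h1, heq]
      obtain ⟨w, hw, hw'⟩ := finrank_eq_one_iff'.mp h
      obtain ⟨c, hc⟩ := hw' ⟨v k, mk⟩
      obtain ⟨d, hd⟩ := hw' ⟨v i, mi⟩
      have hc' : c • (w : Fin N → ℝ) = v k := congrArg Subtype.val hc
      have hd' : d • (w : Fin N → ℝ) = v i := congrArg Subtype.val hd
      have e1 := h2 k k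
      have e2 := h2 i i
      have e3 := h2 k i
      rw [if_neg (by rintro rfl; exact lt_irrefl _ hi)] at e3
      rw [if_pos rfl] at e1 e2
      simp only [← hc', ← hd', smul_dotProduct, dotProduct_smul, smul_eq_mul] at e1 e2 e3
      have : (c * (c * ((w : Fin N → ℝ) ⬝ᵥ w))) * (d * (d * ((w : Fin N → ℝ) ⬝ᵥ w))) = 0 := by
        calc _ = (d * (c * ((w : Fin N → ℝ) ⬝ᵥ w))) * (d * (c * ((w : Fin N → ℝ) ⬝ᵥ w))) := by ring
          _ = 0 := by rw [e3]; ring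
      rw [e1, e2] at this
      norm_num at this
  rw [this, ncard_lt k.2.le]

lemma cut_form {N β : ℕ} (G : SimpleGraph (Fin N)) [DecidableRel G.Adj]
    (q : Fin N → ℝ) (uE vE : Fin β → Fin N) (hne : ∀ j, uE j ≠ vE j) (γ : Fin β → ℝ)
    (hγ : ∀ j, γ j ≠ 0) (z x : Fin N → ℝ) :
    z ⬝ᵥ schrodCut G q uE vE γ *ᵥ x = z ⬝ᵥ schrodOp G q *ᵥ x -
      ∑ j, (z (uE j) - (γ j)⁻¹ * z (vE j)) * (γ j * x (uE j) - x (vE j)) := by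
  have h1 : ∀ j, (Matrix.of (fun a b : Fin N =>
    if a = uE j ∧ b = uE j then γ j
    else if a = vE j ∧ b = vE j then (γ j)⁻¹
    else if (a = uE j ∧ b = vE j) ∨ (a = vE j ∧ b = uE j) then -1
    else 0)) = Matrix.single (uE j) (uE j) (γ j) + Matrix.single (vE j) (vE j) (γ j)⁻¹
      - Matrix.single (uE j) (vE j) 1 - Matrix.single (vE j) (uE j) 1 := by
    intro j
    ext a b
    have := hne j
    simp only [Matrix.of_apply, Matrix.sub_apply, Matrix.add_apply, Matrix.single_apply]
    by_cases h1 : a = uE j <;> by_cases h2 : a = vE j <;> by_cases h3 : b = uE j <;>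
      by_cases h4 : b = vE j <;> simp_all [eq_comm]
  unfold schrodCut
  rw [sub_mulVec, dotProduct_sub, sum_mulVec, dotProduct_sum]
  congr 1
  refine Finset.sum_congr rfl fun j _ => ?_
  rw [h1]
  simp only [sub_mulVec, add_mulVec, single_mulVec_eq, dotProduct_sub, dotProduct_add, dotProduct_smul, dotProduct_single, smul_eq_mul]
  have := hγ j
  field_simp
  ring

lemma schrodOp_herm {N : ℕ} (G : SimpleGraph (Fin N)) [DecidableRel G.Adj] (q : Fin N → ℝ) :
    (schrodOp G q).IsHermitian := by
  unfold schrodOp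
  refine Matrix.IsHermitian.sub ?_ ?_
  · exact Matrix.isHermitian_diagonal _
  · rw [Matrix.IsHermitian, conjTranspose_eq_transpose_of_trivial, SimpleGraph.transpose_adjMatrix]

lemma schrodCut_herm {N β : ℕ} (G : SimpleGraph (Fin N)) [DecidableRel G.Adj]
    (q : Fin N → ℝ) (uE vE : Fin β → Fin N) (γ : Fin β → ℝ) :
    (schrodCut G q uE vE γ).IsHermitian := by
  unfold schrodCut
  refine Matrix.IsHermitian.sub (schrodOp_herm G q) ?_
  rw [Matrix.IsHermitian, conjTranspose_eq_transpose_of_trivial, transpose_sum]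
  refine Finset.sum_congr rfl fun j _ => ?_
  ext a b
  simp only [transpose_apply, of_apply, and_comm, or_comm]

lemma schrodCut_contDiff {N β : ℕ} (G : SimpleGraph (Fin N)) [DecidableRel G.Adj]
    (q : Fin N → ℝ) (uE vE : Fin β → Fin N) (γ : Fin β → ℝ) (hγ : ∀ j, γ j ≠ 0) (a b : Fin N) :
    ContDiffAt ℝ 2 (fun γ => schrodCut G q uE vE γ a b) γ := by
  simp only [schrodCut, Matrix.sub_apply, Matrix.sum_apply, of_apply]
  refine contDiffAt_const.sub (ContDiffAt.sum fun j _ => ?_)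
  split_ifs
  · fun_prop
  · exact ContDiffAt.inv (by fun_prop) (hγ j)
  · exact contDiffAt_const
  · exact contDiffAt_const

lemma schrodCut_off {N β : ℕ} (G : SimpleGraph (Fin N)) [DecidableRel G.Adj]
    (q : Fin N → ℝ) (uE vE : Fin β → Fin N) (hadj : ∀ j, G.Adj (uE j) (vE j))
    (hdistinct : ∀ i j, s(uE i, vE i) = s(uE j, vE j) → i = j) (γ : Fin β → ℝ) (a b : Fin N)
    (hab : a ≠ b) :
    ((G.deleteEdges {e | ∃ j, e = s(uE j, vE j)}).Adj a b → schrodCut G q uE vE γ a b = -1) ∧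
    (¬ (G.deleteEdges {e | ∃ j, e = s(uE j, vE j)}).Adj a b → schrodCut G q uE vE γ a b = 0) := by
  have h1 : schrodCut G q uE vE γ a b = - (if G.Adj a b then 1 else 0) +
      ∑ j, if s(a, b) = s(uE j, vE j) then 1 else 0 := by
    simp only [schrodCut, schrodOp, Matrix.sub_apply, Matrix.sum_apply, of_apply, diagonal_apply_ne q hab,
      SimpleGraph.adjMatrix_apply, zero_sub]
    rw [sub_eq_add_neg, ← Finset.sum_neg_distrib]
    congr 1
    refine Finset.sum_congr rfl fun j _ => ?_
    rw [if_neg (by rintro ⟨rfl, h⟩; exact hab h.symm), if_neg (by rintro ⟨rfl, h⟩; exact hab h.symm)]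
    simp only [Sym2.eq_iff]
    split_ifs <;> simp
  rw [SimpleGraph.deleteEdges_adj, h1]
  simp only [Set.mem_ofPred_eq]
  by_cases hj : ∃ j, s(a, b) = s(uE j, vE j)
  · refine ⟨fun h => absurd hj h.2, fun _ => ?_⟩
    obtain ⟨j, hj⟩ := hj
    have hG : G.Adj a b := by
      have := hadj j
      rw [← SimpleGraph.mem_edgeSet, ← hj, SimpleGraph.mem_edgeSet] at this
      exact this
    rw [if_pos hG, Finset.sum_eq_single j]
    · rw [if_pos hj]; ring
    · intro i _ hi
      rw [if_neg]
      intro h; exact hi (hdistinct i j (h.symm.trans hj))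
    · simp
  · have h2 : (∑ j, if s(a, b) = s(uE j, vE j) then (1:ℝ) else 0) = 0 :=
      Finset.sum_eq_zero fun j _ => if_neg fun h => hj ⟨j, h⟩
    rw [h2]
    constructor
    · intro h; rw [if_pos h.1]; ring
    · intro h; rw [if_neg (fun hG => h ⟨hG, hj⟩)]; ring

lemma sign_count {N β : ℕ} (G : SimpleGraph (Fin N))
    (uE vE : Fin β → Fin N) (hadj : ∀ j, G.Adj (uE j) (vE j))
    (hdistinct : ∀ i j, s(uE i, vE i) = s(uE j, vE j) → i = j) (f : Fin N → ℝ) :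
    signChanges G f =
      {e | e ∈ (G.deleteEdges {e | ∃ j, e = s(uE j, vE j)}).edgeSet ∧ negE f e}.ncard +
      {j : Fin β | f (vE j) / f (uE j) < 0}.ncard := by
  have hinj : Function.Injective fun j => s(uE j, vE j) := fun i j h => hdistinct i j h
  rw [← Set.ncard_image_of_injective _ hinj, ← Set.ncard_union_eq]
  · unfold signChanges
    congr 1
    ext e
    simp only [Set.mem_ofPred_eq, Set.mem_union, Set.mem_image, SimpleGraph.edgeSet_deleteEdges, Set.mem_sdiff]
    have hiff : ∀ j, f (vE j) / f (uE j) < 0 ↔ negE f s(uE j, vE j) := by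
      intro j
      rw [negE_mk, div_neg_iff, mul_neg_iff]; tauto
    constructor
    · rintro ⟨h1, h2⟩
      by_cases hj : ∃ j, e = s(uE j, vE j)
      · obtain ⟨j, rfl⟩ := hj
        exact Or.inr ⟨j, (hiff j).mpr h2, rfl⟩
      · exact Or.inl ⟨⟨h1, hj⟩, h2⟩
    · rintro (⟨⟨h1, _⟩, h2⟩ | ⟨j, hj, rfl⟩)
      · exact ⟨h1, h2⟩
      · exact ⟨by simpa using hadj j, (hiff j).mp hj⟩
  · rw [Set.disjoint_left]
    rintro e ⟨h1, _⟩ ⟨j, _, rfl⟩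
    rw [SimpleGraph.edgeSet_deleteEdges] at h1
    exact h1.2 ⟨j, rfl⟩

lemma HasIdx.scale {V : Type*} [AddCommGroup V] [Module ℝ V] {Q : V → ℝ} {k : ℕ} (h : HasIdx Q k)
    (s : ℝ) (hs : 0 < s) : HasIdx (fun x => s * Q x) k := by
  obtain ⟨W, U, h1, h2, h3, h4⟩ := h
  exact ⟨W, U, h1, h2, fun x hx h0 => mul_neg_of_pos_of_neg hs (h3 x hx h0),
    fun x hx => mul_nonneg hs.le (h4 x hx)⟩

lemma index_calc {N β : ℕ} (H M : Matrix (Fin N) (Fin N) ℝ) (K : Matrix (Fin β) (Fin β) ℝ)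
    (hH : H.IsHermitian) (hM : M.IsHermitian) (hK : K.IsHermitian)
    (u v : Fin β → Fin N) (f : Fin N → ℝ) (hf0 : ∀ a, f a ≠ 0) (hff : 0 < f ⬝ᵥ f)
    (g : Fin β → ℝ) (hg : ∀ j, g j ≠ 0) (lam : ℝ)
    (hcut : ∀ z x, z ⬝ᵥ M *ᵥ x = z ⬝ᵥ H *ᵥ x -
      ∑ j, (z (u j) - (g j)⁻¹ * z (v j)) * (g j * x (u j) - x (v j)))
    (Y : (Fin β → ℝ) →ₗ[ℝ] (Fin N → ℝ))
    (hY : ∀ z t, z ⬝ᵥ H *ᵥ (Y t) - lam * (z ⬝ᵥ Y t) =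
      ∑ j, (z (u j) - (g j)⁻¹ * z (v j)) * (t j * f (u j) + g j * Y t (u j) - Y t (v j)))
    (hKt : ∀ t, t ⬝ᵥ K *ᵥ t = 2 * ∑ j, t j * (- (f (u j) / (f ⬝ᵥ f)) *
      (Y t (u j) - (g j)⁻¹ * Y t (v j) + (g j)⁻¹ * f (u j) * t j))) :
    {i | sortedEigs M i < lam}.ncard + {i | sortedEigs K i < 0}.ncard =
      {i | sortedEigs H i < lam}.ncard + {j | 0 < (g j)⁻¹}.ncard := by
  have i1 := (idx_matrix M hM lam).prod ((idx_matrix K hK 0).scale (f ⬝ᵥ f / 2) (by positivity))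
    (by simp) (by simp)
  have i2 := (idx_matrix H hH lam).prod (idx_diag fun j => (g j)⁻¹) (by simp) (by simp)
  let L : ((Fin N → ℝ) × (Fin β → ℝ)) →ₗ[ℝ] ((Fin N → ℝ) × (Fin β → ℝ)) :=
    { toFun := fun p => (p.1 + Y p.2, fun j => p.2 j * f (u j) + g j * (p.1 + Y p.2) (u j)
        - (p.1 + Y p.2) (v j))
      map_add' := by
        intro a b
        refine Prod.ext ?_ ?_
        · simp only [Prod.fst_add, Prod.snd_add, map_add]; abel
        · ext j; simp only [Prod.fst_add, Prod.snd_add, map_add, Pi.add_apply]; ring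
      map_smul' := by
        intro c a
        refine Prod.ext ?_ ?_
        · simp
        · ext j
          simp only [Prod.smul_fst, Prod.smul_snd, map_smul, Pi.add_apply, Pi.smul_apply,
            smul_eq_mul, RingHom.id_apply]; ring }
  have hL : ∀ p, L p = (p.1 + Y p.2, fun j => p.2 j * f (u j) + g j * (p.1 + Y p.2) (u j)
        - (p.1 + Y p.2) (v j)) := fun p => rfl
  have hinj : Function.Injective L := by
    rw [injective_iff_map_eq_zero]
    rintro ⟨y, t⟩ h
    rw [hL] at h
    have h1 : y + Y t = 0 := congrArg Prod.fst h
    have h2 := congrArg Prod.snd h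
    have ht : t = 0 := by
      ext j
      have h3 := congrFun h2 j
      simp only [h1, Pi.zero_apply, mul_zero, add_zero, sub_zero, Prod.snd_zero] at h3
      simpa [hf0] using h3
    subst ht
    simpa using h1
  refine HasIdx.unique (i1.equiv (LinearEquiv.ofInjectiveEndo L hinj) ?_) i2
  rintro ⟨y, t⟩
  rw [LinearEquiv.coe_ofInjectiveEndo, hL]
  simp only
  have e1 := hcut y y
  have e2 := hY y t
  have e3 := hY (Y t) t
  have e5 : Y t ⬝ᵥ H *ᵥ y = y ⬝ᵥ H *ᵥ (Y t) := by
    rw [dotProduct_mulVec, ← mulVec_transpose, ← conjTranspose_eq_transpose_of_trivial, hH.eq,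
      dotProduct_comm]
  have e6 : Y t ⬝ᵥ y = y ⬝ᵥ Y t := dotProduct_comm _ _
  rw [hKt]
  simp only [mulVec_add, add_dotProduct, dotProduct_add, e5, e6, e1]
  have e4 : -∑ j, (g j)⁻¹ * (t j * f (u j) + g j * (y + Y t) (u j) - (y + Y t) (v j))^2 =
     - ∑ j, (y (u j) - (g j)⁻¹ * y (v j)) * (g j * y (u j) - y (v j))
     - 2 * ∑ j, (y (u j) - (g j)⁻¹ * y (v j)) * (t j * f (u j) + g j * Y t (u j) - Y t (v j))
     - ∑ j, (Y t (u j) - (g j)⁻¹ * Y t (v j)) * (t j * f (u j) + g j * Y t (u j) - Y t (v j))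
     + (f ⬝ᵥ f) * ∑ j, t j * (- (f (u j) / (f ⬝ᵥ f)) *
      (Y t (u j) - (g j)⁻¹ * Y t (v j) + (g j)⁻¹ * f (u j) * t j)) := by
    simp only [Finset.mul_sum, ← Finset.sum_neg_distrib, ← Finset.sum_sub_distrib,
      ← Finset.sum_add_distrib]
    refine Finset.sum_congr rfl fun j _ => ?_
    have := hg j
    have := hff.ne'
    simp only [Pi.add_apply]
    field_simp
    ring
  rw [e4]
  linarith

open Filter Topology in
lemma branch_deriv {N β : ℕ} (G : SimpleGraph (Fin N)) [DecidableRel G.Adj] (q : Fin N → ℝ)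
    (u v : Fin β → Fin N) (hne : ∀ j, u j ≠ v j) (f : Fin N → ℝ)
    (hff : 0 < f ⬝ᵥ f) (g : Fin β → ℝ) (hg : ∀ j, g j ≠ 0) (hgf : ∀ j, f (v j) = g j * f (u j))
    (lam : ℝ) (hf : schrodOp G q *ᵥ f = lam • f)
    (x : (Fin β → ℝ) → Fin N → ℝ) (μ : (Fin β → ℝ) → ℝ)
    (hx : ContDiffAt ℝ 2 x g) (hμ : ContDiffAt ℝ 2 μ g) (hx0 : x g = f) (hμ0 : μ g = lam)
    (hev : ∀ᶠ γ in 𝓝 g, schrodCut G q u v γ *ᵥ x γ = μ γ • x γ ∧ x γ ⬝ᵥ f = f ⬝ᵥ f)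
    (F : (Fin β → ℝ) → ℝ) (hF : F =ᶠ[𝓝 g] μ) :
    fderiv ℝ F g = 0 ∧ (hessMat F g).IsHermitian ∧
    ∃ Y : (Fin β → ℝ) →ₗ[ℝ] (Fin N → ℝ),
    (∀ z t, z ⬝ᵥ schrodOp G q *ᵥ (Y t) - lam * (z ⬝ᵥ Y t) =
      ∑ j, (z (u j) - (g j)⁻¹ * z (v j)) * (t j * f (u j) + g j * Y t (u j) - Y t (v j))) ∧
    (∀ t, t ⬝ᵥ hessMat F g *ᵥ t = 2 * ∑ j, t j * (- (f (u j) / (f ⬝ᵥ f)) *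
      (Y t (u j) - (g j)⁻¹ * Y t (v j) + (g j)⁻¹ * f (u j) * t j))) := by
  have hne0 : ∀ᶠ γ in 𝓝 g, ∀ j, γ j ≠ 0 := by
    rw [eventually_all]
    intro j
    exact (continuous_apply j).continuousAt.eventually_ne (hg j)
  have hsymH : ∀ a b, a ⬝ᵥ schrodOp G q *ᵥ b = b ⬝ᵥ schrodOp G q *ᵥ a := by
    intro a b
    rw [dotProduct_mulVec, ← mulVec_transpose, ← conjTranspose_eq_transpose_of_trivial,
      (schrodOp_herm G q).eq, dotProduct_comm]
  let h : Fin β → (Fin β → ℝ) → ℝ := fun j γ =>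
    -(f (u j) / (f ⬝ᵥ f)) * (x γ (u j) - (γ j)⁻¹ * x γ (v j))
  have hhC : ∀ j, ContDiffAt ℝ 2 (h j) g := by
    intro j
    have a1 : ContDiffAt ℝ 2 (fun γ => x γ (u j)) g := contDiffAt_pi.1 hx _
    have a2 : ContDiffAt ℝ 2 (fun γ => x γ (v j)) g := contDiffAt_pi.1 hx _
    have a3 : ContDiffAt ℝ 2 (fun γ : Fin β → ℝ => (γ j)⁻¹) g :=
      ContDiffAt.inv (by fun_prop) (hg j)
    exact contDiffAt_const.mul (a1.sub (a3.mul a2))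
  have hh0 : ∀ j, h j g = 0 := by
    intro j
    simp only [h, hx0, hgf, inv_mul_cancel_left₀ (hg j), sub_self, mul_zero]
  have hμF : μ =ᶠ[𝓝 g] fun γ => lam + ∑ j, (γ j - g j) * h j γ := by
    filter_upwards [hev, hne0] with γ ⟨h1, h2⟩ h3
    have c1 := cut_form G q u v hne γ h3 f (x γ)
    rw [h1, hsymH, hf, dotProduct_smul, dotProduct_smul, dotProduct_comm f, h2, smul_eq_mul,
      smul_eq_mul] at c1
    have c2 : μ γ = lam + (-∑ j, (f (u j) - (γ j)⁻¹ * f (v j)) * (γ j * x γ (u j) - x γ (v j))) /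
        (f ⬝ᵥ f) := by
      rw [← sub_eq_iff_eq_add', eq_div_iff hff.ne']
      linarith
    rw [c2, ← Finset.sum_neg_distrib, Finset.sum_div]
    congr 1
    refine Finset.sum_congr rfl fun j _ => ?_
    have := h3 j
    simp only [h, hgf]
    field_simp
  obtain ⟨d1, d2⟩ := hess_lemma F g lam h hhC hh0 (hF.trans hμF)
  obtain ⟨d3, -⟩ := hess_lemma μ g lam h hhC hh0 hμF
  refine ⟨d1, ?_, ?_⟩
  · ext i j
    simp only [conjTranspose_apply, star_trivial, d2]
    ring
  have hxd : HasFDerivAt x (fderiv ℝ x g) g := (hx.differentiableAt (by norm_num)).hasFDerivAt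
  have hxa : ∀ a, HasFDerivAt (fun γ => x γ a) ((ContinuousLinearMap.proj a).comp (fderiv ℝ x g)) g :=
    fun a => (hasFDerivAt_pi'.1 hxd) a
  have hid : ∀ j, HasFDerivAt (fun γ : Fin β → ℝ => γ j)
      (ContinuousLinearMap.proj (R := ℝ) (φ := fun _ : Fin β => ℝ) j) g := fun j =>
    hasFDerivAt_apply j g
  have hinv : ∀ j, HasFDerivAt (fun γ : Fin β → ℝ => (γ j)⁻¹)
      ((-((g j)^2)⁻¹) • (ContinuousLinearMap.proj (R := ℝ) (φ := fun _ : Fin β => ℝ) j)) g := fun j =>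
    (hasDerivAt_inv (hg j)).comp_hasFDerivAt g (hid j)
  have hdot : ∀ w : Fin N → ℝ, HasFDerivAt (fun γ => w ⬝ᵥ x γ)
      (∑ a, w a • ((ContinuousLinearMap.proj a).comp (fderiv ℝ x g))) g := by
    intro w
    simp only [dotProduct]
    exact HasFDerivAt.fun_sum fun a _ => (hxa a).const_mul (w a)
  have hdot' : ∀ (w : Fin N → ℝ) t,
      (∑ a, w a • ((ContinuousLinearMap.proj (R := ℝ) (φ := fun _ : Fin N => ℝ) a).comp
        (fderiv ℝ x g))) t = w ⬝ᵥ fderiv ℝ x g t := by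
    intro w t
    simp [dotProduct]
  refine ⟨(fderiv ℝ x g).toLinearMap, ?_, ?_⟩
  · intro z t
    simp only [ContinuousLinearMap.coe_coe]
    have hE : (fun γ => (schrodOp G q *ᵥ z) ⬝ᵥ x γ) =ᶠ[𝓝 g] fun γ => μ γ * (z ⬝ᵥ x γ) +
        ∑ j, (z (u j) - (γ j)⁻¹ * z (v j)) * (γ j * x γ (u j) - x γ (v j)) := by
      filter_upwards [hev, hne0] with γ ⟨h1, h2⟩ h3
      have c1 := cut_form G q u v hne γ h3 z (x γ)
      rw [h1, hsymH, dotProduct_smul, smul_eq_mul, dotProduct_comm (x γ)] at c1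
      linarith
    have hμd : HasFDerivAt μ (0 : (Fin β → ℝ) →L[ℝ] ℝ) g := by
      rw [← d3]; exact (hμ.differentiableAt (by norm_num)).hasFDerivAt
    have r1 := (hμd.mul (hdot z)).add (HasFDerivAt.fun_sum (u := Finset.univ) fun j _ =>
      (((hinv j).mul_const (z (v j))).const_sub (z (u j))).mul
        (((hid j).mul (hxa (u j))).sub (hxa (v j))))
    have r2 := (hdot (schrodOp G q *ᵥ z)).congr_of_eventuallyEq hE.symm
    have r3 := congrArg (fun l => l t) (r2.unique r1)
    simp only [hdot'] at r3
    rw [dotProduct_comm (schrodOp G q *ᵥ z), hsymH] at r3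
    rw [r3]
    simp only [_root_.add_apply, _root_.smul_apply,
      _root_.sum_apply, hdot', hμ0, hx0, _root_.zero_apply,
      _root_.neg_apply, _root_.sub_apply,
      ContinuousLinearMap.comp_apply, ContinuousLinearMap.proj_apply, smul_eq_mul, mul_zero,
      add_zero, add_sub_cancel_left]
    refine Finset.sum_congr rfl fun j _ => ?_
    simp only [Pi.sub_apply, Pi.mul_apply, hx0]
    rw [hgf]
    ring
  · intro t
    have hhd : ∀ j t, fderiv ℝ (h j) g t = - (f (u j) / (f ⬝ᵥ f)) *
      (fderiv ℝ x g t (u j) - (g j)⁻¹ * fderiv ℝ x g t (v j) + (g j)⁻¹ * f (u j) * t j) := by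
      intro j t
      have r1 := (((hxa (u j)).sub ((hinv j).mul (hxa (v j)))).const_mul (-(f (u j) / (f ⬝ᵥ f)))).fderiv
      have r2 : fderiv ℝ (h j) g = _ := r1
      rw [r2]
      simp only [_root_.add_apply, _root_.smul_apply, hx0,
        _root_.sub_apply,
        ContinuousLinearMap.comp_apply, ContinuousLinearMap.proj_apply, smul_eq_mul]
      rw [hgf]
      have := hg j
      field_simp
      ring
    simp only [ContinuousLinearMap.coe_coe, ← hhd]
    have hlin : ∀ j, fderiv ℝ (h j) g t = ∑ i, t i * fderiv ℝ (h j) g (Pi.single i 1) := by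
      intro j
      conv_lhs => rw [pi_eq_sum_univ' t]
      simp [map_sum]
    simp only [hlin, dotProduct, mulVec, d2]
    simp only [Finset.mul_sum, two_mul, add_mul, mul_add, Finset.sum_add_distrib]
    rw [Finset.sum_comm]
    congr 1
    · refine Finset.sum_congr rfl fun i _ => Finset.sum_congr rfl fun j _ => by ring
    · refine Finset.sum_congr rfl fun i _ => Finset.sum_congr rfl fun j _ => by ring
/-- `γ̃ = (f_{v_j}/f_{u_j})_j` is a critical point of
`γ ↦ λ_{φ-p+1}(H(Γ^cut_γ))`, and its Morse index equals `n - 1 + β - φ` (stated additively as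
`index + φ = (n-1) + β` to avoid truncated `ℕ`-subtraction). -/
theorem cut_eigenvalue_morse_index {N β : ℕ} (G : SimpleGraph (Fin N))
    [DecidableRel G.Adj] (hconn : G.Connected) (q : Fin N → ℝ)
    (uE vE : Fin β → Fin N)
    (hadj : ∀ j, G.Adj (uE j) (vE j))
    (hdistinct : ∀ i j, s(uE i, vE i) = s(uE j, vE j) → i = j)
    (htree : (G.deleteEdges {e | ∃ j, e = s(uE j, vE j)}).IsTree)
    (hβ : β + N = G.edgeFinset.card + 1)
    (n : ℕ) (hn1 : 1 ≤ n) (hn2 : n ≤ N)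
    (f : Fin N → ℝ)
    (heig : (schrodOp G q).mulVec f = sE (schrodOp G q) (n - 1) • f)
    (hsimple : Module.finrank ℝ
      (Module.End.eigenspace (Matrix.toLin' (schrodOp G q)) (sE (schrodOp G q) (n - 1))) = 1)
    (hf0 : ∀ v, f v ≠ 0)
    (φ p : ℕ) (hφ : φ = signChanges G f)
    (hp : p = {j : Fin β | f (vE j) / f (uE j) < 0}.ncard)
    (lamCut : (Fin β → ℝ) → ℝ)
    (hlamCut : lamCut = fun γ => sE (schrodCut G q uE vE γ) (φ - p)) :
    fderiv ℝ lamCut (fun j => f (vE j) / f (uE j)) = 0 ∧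
    negEigCount (hessMat lamCut (fun j => f (vE j) / f (uE j))) + φ = (n - 1) + β := by
  classical
  have hu : ∀ j, f (uE j) ≠ 0 := fun j => hf0 _
  set g : Fin β → ℝ := fun j => f (vE j) / f (uE j) with hgdef
  have hg : ∀ j, g j ≠ 0 := fun j => div_ne_zero (hf0 _) (hf0 _)
  have hgf : ∀ j, f (vE j) = g j * f (uE j) := fun j => (div_mul_cancel₀ _ (hf0 _)).symm
  have hne : ∀ j, uE j ≠ vE j := fun j => (hadj j).ne
  have hnN : n - 1 < N := by omega
  have hsE : sE (schrodOp G q) (n - 1) = sortedEigs (schrodOp G q) ⟨n - 1, hnN⟩ := by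
    rw [sE, dif_pos hnN]
  set lam := sE (schrodOp G q) (n - 1) with hlam
  have hff : 0 < f ⬝ᵥ f := by
    simp only [dotProduct]
    exact Finset.sum_pos (fun a _ => mul_self_pos.2 (hf0 a)) ⟨⟨n - 1, hnN⟩, Finset.mem_univ _⟩
  have hcut := fun z x => cut_form G q uE vE hne g hg z x
  set M := schrodCut G q uE vE g with hMdef
  have hM : M.IsHermitian := schrodCut_herm G q uE vE g
  have hMf : M *ᵥ f = lam • f := by
    ext a
    have h1 := hcut (Pi.single a 1) f
    rw [Finset.sum_eq_zero (fun j _ => by rw [hgf, sub_self, mul_zero]), sub_zero, heig] at h1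
    simpa [single_dotProduct] using h1
  obtain ⟨k, hk⟩ : ∃ k, k = {e | e ∈ (G.deleteEdges {e | ∃ j, e = s(uE j, vE j)}).edgeSet ∧
    negE f e}.ncard := ⟨_, rfl⟩
  have hφk : φ = k + p := by rw [hφ, hk, hp]; exact sign_count G uE vE hadj hdistinct f
  have hφp : φ - p = k := by omega
  rw [hφp] at hlamCut
  obtain ⟨hkN, t1, t2, t3⟩ := tree_eigs _ htree M hM f hf0 lam hMf
    (fun a b hab => (schrodCut_off G q uE vE hadj hdistinct g a b hab.ne).1 hab)
    (fun a b hab => (schrodCut_off G q uE vE hadj hdistinct g a b hab).2) k hk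
  have hsep : ∀ i : Fin N, i ≠ ⟨k, hkN⟩ → sortedEigs M i ≠ lam := by
    intro i hi
    rcases lt_or_gt_of_ne (fun h => hi (Fin.ext h) : (i : ℕ) ≠ k) with h | h
    · exact (t1 i h).ne
    · exact (t2 i h).ne'
  obtain ⟨x, μ, hx, hμ, hx0, hμ0, hev⟩ := implicit_eig (fun γ => schrodCut G q uE vE γ) g f lam
    (fun a b => schrodCut_contDiff G q uE vE g hg a b) hM hMf hff.ne'
    (simple_ker M hM f hff.ne' lam hMf ⟨k, hkN⟩ hsep)
  have hF : ∀ᶠ γ in nhds g, lamCut γ = μ γ := by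
    have e1 : ∀ᶠ γ in nhds g, ∀ i, i ≠ (⟨k, hkN⟩ : Fin N) →
        sortedEigs (schrodCut G q uE vE γ) i ≠ μ γ := by
      rw [Filter.eventually_all]
      intro i
      by_cases hi : i = ⟨k, hkN⟩
      · simp [hi]
      have c1 : ContinuousAt (fun γ => sortedEigs (schrodCut G q uE vE γ) i) g :=
        sortedEigs_cont _ g (schrodCut_herm G q uE vE)
          (fun a b => (schrodCut_contDiff G q uE vE g hg a b).continuousAt) i
      have c2 := (c1.sub hμ.continuousAt).eventually_ne
        (y := 0) (by simpa [hμ0, sub_eq_zero] using hsep i hi)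
      filter_upwards [c2] with γ h _ h'
      exact h (sub_eq_zero.2 h')
    filter_upwards [e1, hev] with γ h1 ⟨h2, h3⟩
    obtain ⟨i, hi⟩ := eig_exists _ (schrodCut_herm G q uE vE γ) (μ γ) (x γ)
      (by rintro h; rw [h, zero_dotProduct] at h3; exact hff.ne h3) h2
    have hik : i = ⟨k, hkN⟩ := by
      by_contra hne'
      exact h1 i hne' hi
    rw [hlamCut]
    simp only [sE, dif_pos hkN]
    rw [← hik, hi]
  obtain ⟨r1, r2, Y, r3, r4⟩ := branch_deriv G q uE vE hne f hff g hg hgf lam heig x μ hx hμ hx0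
    hμ0 hev lamCut hF
  refine ⟨r1, ?_⟩
  have key := index_calc (schrodOp G q) M (hessMat lamCut g) (schrodOp_herm G q) hM r2 uE vE f hf0
    hff g hg lam hcut Y r3 r4
  have k1 : {i | sortedEigs M i < lam}.ncard = k := by
    rw [← ncard_lt hkN.le]
    congr 1
    ext i
    simp only [Set.mem_ofPred_eq]
    refine ⟨fun h => ?_, t1 i⟩
    by_contra hcon
    rcases (not_lt.1 hcon).eq_or_lt with h' | h'
    · have : i = ⟨k, hkN⟩ := Fin.ext h'.symm
      rw [this, t3] at h
      exact lt_irrefl _ h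
    · exact lt_asymm h (t2 i h')
  have k2 : {i | sortedEigs (schrodOp G q) i < lam}.ncard = n - 1 := by
    rw [hsE] at hsimple ⊢
    exact count_simple _ (schrodOp_herm G q) ⟨n - 1, hnN⟩ hsimple
  have k3 : {j | 0 < (g j)⁻¹}.ncard + p = β := by
    have h1 : {j | 0 < (g j)⁻¹} = {j | g j < 0}ᶜ := by
      ext j
      simp only [Set.mem_ofPred_eq, Set.mem_compl_iff, inv_pos, not_lt]
      exact ⟨le_of_lt, fun h => h.lt_of_ne (hg j).symm⟩
    have h2 := Set.ncard_add_ncard_compl {j | g j < 0}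
    rw [Nat.card_fin] at h2
    have h3 : p = {j | g j < 0}.ncard := hp
    rw [h1, h3]
    omega
  rw [k1, k2] at key
  unfold negEigCount
  omega
end

section
/- Let Γ = (V,E) be a simple finite connected graph, q : V → ℝ a potential, and H(Γ) = Q − C the discrete Schrödinger operator, where Q = diag(q) and C is the adjacency matrix of Γ. Let β = |E| − |V| + 1, fix a spanning tree of Γ, and let S = {e_1, …, e_β} be the edges not in the tree, with e_j = (u_j, v_j), u_j < v_j. For α = (α_1,…,α_β) ∈ ℝ^β let H(Γ^α_mag) be the Hermitian matrix with diagonal entries q_u, entries −1 at positions (u,v),(v,u) for edges (u,v) ∈ E∖S, entries −e^{iα_j} at (u_j,v_j) and −e^{−iα_j} at (v_j,u_j) for e_j ∈ S, and 0 elsewhere. Suppose λ_n(H(Γ)) (the n-th smallest eigenvalue) is simple and its eigenvector f is nonzero at every vertex; let φ be the number of edges (u,v) ∈ E with f_u f_v < 0. Then α = 0 is a critical point of the function α ↦ λ_n(H(Γ^α_mag)), and the Morse index of this critical point (the number of negative eigenvalues of the Hessian at 0) equals the nodal surplus σ = φ − (n − 1). -/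
open Matrix

namespace NS

open Matrix


theorem dim_lemma {K A B V : Type*} [Field K] [AddCommGroup A] [AddCommGroup B] [AddCommGroup V]
    [Module K A] [Module K B] [Module K V] [FiniteDimensional K V] [FiniteDimensional K A]
    [FiniteDimensional K B]
    (L1 : A →ₗ[K] V) (L2 : B →ₗ[K] V) (h : ∀ a b, L1 a = L2 b → a = 0 ∧ b = 0) :
    Module.finrank K A + Module.finrank K B ≤ Module.finrank K V := by
  rw [← Module.finrank_prod]
  refine LinearMap.finrank_le_finrank_of_injective (f := L1.coprod (-L2)) ?_
  rw [injective_iff_map_eq_zero]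
  rintro ⟨a, b⟩ hab
  have : L1 a = L2 b := by
    simp only [LinearMap.coprod_apply, LinearMap.neg_apply] at hab
    exact add_neg_eq_zero.mp hab
  have := h a b this
  simp [this.1, this.2]

/-- extension by zero -/
def ext0 (K : Type*) [Field K] {ι : Type*} (p : ι → Prop) [DecidablePred p] :
    ({i // p i} → K) →ₗ[K] (ι → K) where
  toFun c i := if h : p i then c ⟨i, h⟩ else 0
  map_add' a b := by ext i; by_cases h : p i <;> simp [h]
  map_smul' a b := by ext i; by_cases h : p i <;> simp [h]

theorem ext0_of_not {K : Type*} [Field K] {ι : Type*} {p : ι → Prop} [DecidablePred p]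
    (c : {i // p i} → K) {i : ι} (h : ¬ p i) : ext0 K p c i = 0 := by simp [ext0, h]

theorem ext0_inj {K : Type*} [Field K] {ι : Type*} {p : ι → Prop} [DecidablePred p]
    (c : {i // p i} → K) (h : ext0 K p c = 0) : c = 0 := by
  ext ⟨i, hi⟩
  have := congrFun h i
  simpa [ext0, hi] using this

noncomputable def qf {𝕜 : Type*} [RCLike 𝕜] {d : ℕ} (M : Matrix (Fin d) (Fin d) 𝕜)
    (x : Fin d → 𝕜) : ℝ := RCLike.re (star x ⬝ᵥ (M *ᵥ x))

theorem sortedEigs_mono {𝕜 : Type*} [RCLike 𝕜] {d : ℕ} (M : Matrix (Fin d) (Fin d) 𝕜) :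
    Monotone (sortedEigs M) := by
  unfold sortedEigs
  split_ifs with h
  · exact Tuple.monotone_sort _
  · exact monotone_const

theorem exists_diag {𝕜 : Type*} [RCLike 𝕜] {d : ℕ} (M : Matrix (Fin d) (Fin d) 𝕜)
    (hM : M.IsHermitian) :
    ∃ U : (Fin d → 𝕜) ≃ₗ[𝕜] (Fin d → 𝕜),
      (∀ x, qf M x = ∑ i, sortedEigs M i * ‖U x i‖ ^ 2) ∧
      (∀ x, ∑ i, ‖x i‖ ^ 2 = ∑ i, ‖U x i‖ ^ 2) ∧
      (∀ x i, U (M *ᵥ x) i = (sortedEigs M i : 𝕜) * U x i) := by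
  let σ := Tuple.sort hM.eigenvalues
  let b := hM.eigenvectorBasis.reindex σ.symm
  have hb : ∀ i, b i = hM.eigenvectorBasis (σ i) := fun i => by simp [b]
  have hs : ∀ i, sortedEigs M i = hM.eigenvalues (σ i) := fun i => by
    simp [sortedEigs, hM, σ]
  let U : (Fin d → 𝕜) ≃ₗ[𝕜] (Fin d → 𝕜) :=
    (WithLp.linearEquiv 2 𝕜 (Fin d → 𝕜)).symm ≪≫ₗ b.repr.toLinearEquiv ≪≫ₗ
      (WithLp.linearEquiv 2 𝕜 (Fin d → 𝕜))
  have hU : ∀ x i, U x i = b.repr (WithLp.toLp 2 x) i := fun x i => rfl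
  have hUM : ∀ x i, U (M *ᵥ x) i = (sortedEigs M i : 𝕜) * U x i := by
    intro x i
    rw [hU, hU, b.repr_apply_apply, b.repr_apply_apply, hs]
    have h1 : inner 𝕜 (b i) (WithLp.toLp 2 (M *ᵥ x)) = (M *ᵥ x) ⬝ᵥ star (b i).ofLp := by
      rw [EuclideanSpace.inner_eq_star_dotProduct]
    have h2 : inner 𝕜 (b i) (WithLp.toLp 2 x) = x ⬝ᵥ star (b i).ofLp := by
      rw [EuclideanSpace.inner_eq_star_dotProduct]
    rw [h1, h2]
    have h3 : M *ᵥ (b i).ofLp = hM.eigenvalues (σ i) • (b i).ofLp := by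
      rw [hb]; exact hM.mulVec_eigenvectorBasis (σ i)
    have h4 : star (b i).ofLp ᵥ* M = hM.eigenvalues (σ i) • star (b i).ofLp := by
      have := congrArg star h3
      rw [star_mulVec, hM.eq] at this
      rw [this]
      ext k
      simp [Algebra.smul_def]
    rw [dotProduct_comm, dotProduct_mulVec, h4, smul_dotProduct, dotProduct_comm]
    simp [Algebra.smul_def]
  have hn : ∀ x, ∑ i, ‖x i‖ ^ 2 = ∑ i, ‖U x i‖ ^ 2 := by
    intro x
    have h := b.repr.norm_map (WithLp.toLp 2 x)
    have := congrArg (· ^ 2) h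
    simp only [EuclideanSpace.norm_sq_eq] at this
    exact this.symm
  refine ⟨U, ?_, hn, hUM⟩
  intro x
  have h1 : star x ⬝ᵥ (M *ᵥ x) = inner 𝕜 (WithLp.toLp 2 x) (WithLp.toLp 2 (M *ᵥ x)) := by
    rw [EuclideanSpace.inner_eq_star_dotProduct, dotProduct_comm]
  have h2 : inner 𝕜 (WithLp.toLp 2 x) (WithLp.toLp 2 (M *ᵥ x)) =
      ∑ i, star (U x i) * U (M *ᵥ x) i := by
    rw [← b.repr.inner_map_map, PiLp.inner_apply]
    refine Finset.sum_congr rfl fun i _ => ?_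
    rw [RCLike.inner_apply, mul_comm]; rfl
  rw [qf, h1, h2, map_sum]
  refine Finset.sum_congr rfl fun i _ => ?_
  rw [hUM, mul_left_comm]
  rw [RCLike.star_def, RCLike.conj_mul, RCLike.re_ofReal_mul]
  congr 1
  norm_cast

theorem nsq_pos {𝕜 : Type*} [RCLike 𝕜] {ι : Type*} [Fintype ι] {x : ι → 𝕜} (hx : x ≠ 0) :
    0 < ∑ i, ‖x i‖ ^ 2 := by
  obtain ⟨i, hi⟩ := Function.ne_iff.mp hx
  refine Finset.sum_pos' (fun _ _ => by positivity) ⟨i, Finset.mem_univ _, ?_⟩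
  have : 0 < ‖x i‖ := norm_pos_iff.mpr hi
  positivity

theorem weyl {𝕜 : Type*} [RCLike 𝕜] {d : ℕ} (M M' : Matrix (Fin d) (Fin d) 𝕜)
    (hM : M.IsHermitian) (hM' : M'.IsHermitian) (ε : ℝ)
    (h : ∀ x, qf M x ≤ qf M' x + ε * ∑ i, ‖x i‖ ^ 2) (k : Fin d) :
    sortedEigs M k ≤ sortedEigs M' k + ε := by
  by_contra! hlt
  obtain ⟨U, hU1, hU2, -⟩ := exists_diag M hM
  obtain ⟨U', hU1', hU2', -⟩ := exists_diag M' hM'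
  have := dim_lemma (U.symm.toLinearMap ∘ₗ ext0 𝕜 (fun i => k ≤ i))
    (U'.symm.toLinearMap ∘ₗ ext0 𝕜 (fun i => i ≤ k)) (by
      intro a c hac
      simp only [LinearMap.comp_apply, LinearEquiv.coe_coe] at hac
      set x := U.symm (ext0 𝕜 (fun i => k ≤ i) a) with hx
      have hUx : U x = ext0 𝕜 (fun i => k ≤ i) a := by simp [hx]
      have hUx' : U' x = ext0 𝕜 (fun i => i ≤ k) c := by rw [hac]; simp
      have hx0 : x = 0 := by
        by_contra hne
        have hpos := nsq_pos hne
        have e1 : sortedEigs M k * ∑ i, ‖x i‖ ^ 2 ≤ qf M x := by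
          rw [hU1, hU2, Finset.mul_sum]
          refine Finset.sum_le_sum fun i _ => ?_
          by_cases hi : k ≤ i
          · exact mul_le_mul_of_nonneg_right (sortedEigs_mono M hi) (by positivity)
          · rw [hUx, ext0_of_not _ hi]; simp
        have e2 : qf M' x ≤ sortedEigs M' k * ∑ i, ‖x i‖ ^ 2 := by
          rw [hU1', hU2', Finset.mul_sum]
          refine Finset.sum_le_sum fun i _ => ?_
          by_cases hi : i ≤ k
          · exact mul_le_mul_of_nonneg_right (sortedEigs_mono M' hi) (by positivity)
          · rw [hUx', ext0_of_not (p := fun i => i ≤ k) _ hi]; simp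
        have e3 := h x
        nlinarith
      rw [hx0, map_zero] at hUx hUx'
      exact ⟨ext0_inj _ hUx.symm, ext0_inj _ hUx'.symm⟩)
  simp only [Module.finrank_fintype_fun_eq_card, Fintype.card_fin] at this
  have c1 : Fintype.card {i : Fin d // k ≤ i} = d - k := by
    rw [Fintype.card_subtype]; 
    rw [show (Finset.univ.filter fun i : Fin d => k ≤ i) = Finset.Ici k by ext; simp]
    simp
  have c2 : Fintype.card {i : Fin d // i ≤ k} = k + 1 := by
    rw [Fintype.card_subtype]; 
    rw [show (Finset.univ.filter fun i : Fin d => i ≤ k) = Finset.Iic k by ext; simp]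
    simp
  rw [c1, c2] at this
  have := k.2
  omega

/-- An eigenvalue appears in the sorted list. -/
theorem exists_sorted {𝕜 : Type*} [RCLike 𝕜] {d : ℕ} (M : Matrix (Fin d) (Fin d) 𝕜)
    (hM : M.IsHermitian) (μ : 𝕜) (g : Fin d → 𝕜) (hg : g ≠ 0) (h : M *ᵥ g = μ • g) :
    ∃ k, (sortedEigs M k : 𝕜) = μ := by
  obtain ⟨U, -, -, hU⟩ := exists_diag M hM
  have hne : U g ≠ 0 := by simpa using hg
  obtain ⟨i, hi⟩ := Function.ne_iff.mp hne
  refine ⟨i, ?_⟩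
  have := hU g i
  rw [h, map_smul] at this
  simp only [Pi.smul_apply, smul_eq_mul] at this
  exact (mul_right_cancel₀ hi this).symm

theorem sorted_inj {d : ℕ} (M : Matrix (Fin d) (Fin d) ℝ) (hM : M.IsHermitian) (l : ℝ)
    (h1 : Module.finrank ℝ (Module.End.eigenspace (Matrix.toLin' M) l) = 1)
    (i j : Fin d) (hi : sortedEigs M i = l) (hj : sortedEigs M j = l) : i = j := by
  by_contra hne
  obtain ⟨U, -, -, hU⟩ := exists_diag M hM
  have key : ∀ k, sortedEigs M k = l →
      U.symm (Pi.single k 1) ∈ Module.End.eigenspace (Matrix.toLin' M) l := by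
    intro k hk
    rw [Module.End.mem_eigenspace_iff, Matrix.toLin'_apply]
    apply U.injective
    ext m
    rw [hU, map_smul]
    simp only [LinearEquiv.apply_symm_apply, Pi.smul_apply, smul_eq_mul]
    by_cases hm : m = k
    · subst hm; simp [hk]
    · simp [hm]
  obtain ⟨c, hc⟩ := (finrank_eq_one_iff_of_nonzero' (⟨_, key i hi⟩ : Module.End.eigenspace (Matrix.toLin' M) l) (by
    intro h0
    have := congrArg Subtype.val h0
    simp at this)).mp h1 ⟨_, key j hj⟩
  have := congrArg Subtype.val hc
  simp only [Submodule.coe_smul] at this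
  rw [← map_smul] at this
  have := U.symm.injective this
  have := congrFun this j
  simp [Ne.symm hne] at this

/-- sorted eigenvalues of real matrix and its complexification agree -/
theorem sorted_map {d : ℕ} (M : Matrix (Fin d) (Fin d) ℝ) (hM : M.IsHermitian) :
    sortedEigs (M.map (fun x => (x : ℂ))) = sortedEigs M := by
  have hMc : (M.map (fun x => (x : ℂ))).IsHermitian := by
    ext i j
    have := congrFun (congrFun hM i) j
    simp at this ⊢
    exact this
  have h3 : (M.map (fun x => (x : ℂ))).charpoly = M.charpoly.map Complex.ofRealHom :=
    Matrix.charpoly_map M Complex.ofRealHom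
  have h4 : (M.map (fun x => (x : ℂ))).charpoly.roots = M.charpoly.roots.map Complex.ofRealHom := by
    rw [h3]
    exact hM.splits_charpoly.roots_map _
  have h5 : hMc.eigenvalues = hM.eigenvalues := by
    suffices hMc.eigenvalues₀ = hM.eigenvalues₀ by
      unfold Matrix.IsHermitian.eigenvalues; rw [this]
    rw [← List.ofFn_inj, ← Matrix.IsHermitian.sort_roots_charpoly_eq_eigenvalues₀,
      ← Matrix.IsHermitian.sort_roots_charpoly_eq_eigenvalues₀, h4, Multiset.map_map]
    congr 1
  simp only [sortedEigs, dif_pos hMc, dif_pos hM, h5]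

theorem qf_sub_le {d : ℕ} (M M' : Matrix (Fin d) (Fin d) ℂ) (x : Fin d → ℂ) :
    qf M x ≤ qf M' x + (∑ i, ∑ j, ‖M i j - M' i j‖) * ∑ i, ‖x i‖ ^ 2 := by
  have e : qf M x - qf M' x = (star x ⬝ᵥ ((M - M') *ᵥ x)).re := by
    simp [qf, Matrix.sub_mulVec, dotProduct_sub]
  have e2 : star x ⬝ᵥ ((M - M') *ᵥ x) = ∑ i, ∑ j, star (x i) * ((M i j - M' i j) * x j) := by
    simp [dotProduct, Matrix.mulVec, Finset.mul_sum]
  have e3 : ∀ i, ‖x i‖ ^ 2 ≤ ∑ i, ‖x i‖ ^ 2 := fun i =>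
    Finset.single_le_sum (f := fun i => ‖x i‖ ^ 2) (fun _ _ => by positivity) (Finset.mem_univ i)
  have : (star x ⬝ᵥ ((M - M') *ᵥ x)).re ≤ (∑ i, ∑ j, ‖M i j - M' i j‖) * ∑ i, ‖x i‖ ^ 2 := by
    refine (Complex.re_le_norm _).trans ?_
    rw [e2, Finset.sum_mul]
    refine (norm_sum_le _ _).trans (Finset.sum_le_sum fun i _ => ?_)
    rw [Finset.sum_mul]
    refine (norm_sum_le _ _).trans (Finset.sum_le_sum fun j _ => ?_)
    rw [norm_mul, norm_mul, norm_star]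
    have h1 := e3 i
    have h2 := e3 j
    have : ‖x i‖ * ‖x j‖ ≤ ∑ i, ‖x i‖ ^ 2 := by nlinarith [sq_nonneg (‖x i‖ - ‖x j‖)]
    calc _ = ‖M i j - M' i j‖ * (‖x i‖ * ‖x j‖) := by ring
      _ ≤ _ := by gcongr
  linarith

theorem sorted_continuousAt {P : Type*} [TopologicalSpace P] {d : ℕ}
    (M : P → Matrix (Fin d) (Fin d) ℂ) (hH : ∀ a, (M a).IsHermitian) (a₀ : P)
    (hc : ∀ i j, ContinuousAt (fun a => M a i j) a₀) (k : Fin d) :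
    ContinuousAt (fun a => sortedEigs (M a) k) a₀ := by
  have hb : ∀ a, |sortedEigs (M a) k - sortedEigs (M a₀) k| ≤ ∑ i, ∑ j, ‖M a i j - M a₀ i j‖ := by
    intro a
    have h1 := weyl (M a) (M a₀) (hH a) (hH a₀) _ (qf_sub_le _ _) k
    have h2 := weyl (M a₀) (M a) (hH a₀) (hH a) _ (qf_sub_le _ _) k
    simp only [norm_sub_rev (M a₀ _ _)] at h2
    rw [abs_le]; constructor <;> linarith
  have hl : Filter.Tendsto (fun a => ∑ i, ∑ j, ‖M a i j - M a₀ i j‖) (nhds a₀) (nhds 0) := by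
    have : ContinuousAt (fun a => ∑ i, ∑ j, ‖M a i j - M a₀ i j‖) a₀ := by
      refine tendsto_finsetSum _ fun i _ => tendsto_finsetSum _ fun j _ => ?_
      exact ((hc i j).sub continuousAt_const).norm
    simpa [ContinuousAt] using this
  rw [ContinuousAt, tendsto_iff_dist_tendsto_zero]
  exact squeeze_zero (fun _ => dist_nonneg) (fun a => by rw [Real.dist_eq]; exact hb a) hl

end NS

namespace NS

open Matrix Topology Filter


variable {N β : ℕ}

/-- antisymmetric magnetic potential -/
noncomputable def At (uE vE : Fin β → Fin N) (α : Fin β → ℝ) (u v : Fin N) : ℝ :=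
  ∑ j, ((if u = uE j ∧ v = vE j then α j else 0) - (if u = vE j ∧ v = uE j then α j else 0))

theorem At_add (uE vE : Fin β → Fin N) (a b : Fin β → ℝ) (u v : Fin N) :
    At uE vE (a + b) u v = At uE vE a u v + At uE vE b u v := by
  unfold At
  rw [← Finset.sum_add_distrib]
  refine Finset.sum_congr rfl fun j _ => ?_
  simp only [Pi.add_apply]
  split_ifs <;> ring

theorem At_smul (uE vE : Fin β → Fin N) (c : ℝ) (b : Fin β → ℝ) (u v : Fin N) :
    At uE vE (c • b) u v = c * At uE vE b u v := by
  unfold At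
  rw [Finset.mul_sum]
  refine Finset.sum_congr rfl fun j _ => ?_
  simp only [Pi.smul_apply, smul_eq_mul]
  split_ifs <;> ring

theorem At_antisymm (uE vE : Fin β → Fin N) (b : Fin β → ℝ) (u v : Fin N) :
    At uE vE b v u = - At uE vE b u v := by
  unfold At
  rw [← Finset.sum_neg_distrib]
  refine Finset.sum_congr rfl fun j _ => ?_
  simp only [and_comm (a := v = uE j), and_comm (a := v = vE j)]
  ring

theorem At_edge (uE vE : Fin β → Fin N) (horder : ∀ j, uE j < vE j)
    (hdistinct : ∀ i j, s(uE i, vE i) = s(uE j, vE j) → i = j) (b : Fin β → ℝ) (j : Fin β) :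
    At uE vE b (uE j) (vE j) = b j := by
  unfold At
  rw [Finset.sum_eq_single j]
  · have := (horder j).ne
    simp [this]
  · intro i _ hij
    rw [if_neg, if_neg, sub_zero]
    · rintro ⟨h1, h2⟩
      exact hij (hdistinct i j (by rw [h1, h2, Sym2.eq_swap]))
    · rintro ⟨h1, h2⟩
      exact hij (hdistinct i j (by rw [h1, h2]))
  · simp

theorem At_non (uE vE : Fin β → Fin N) (b : Fin β → ℝ) (u v : Fin N)
    (h : ∀ j, s(u, v) ≠ s(uE j, vE j)) : At uE vE b u v = 0 := by
  unfold At
  refine Finset.sum_eq_zero fun j _ => ?_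
  rw [if_neg, if_neg, sub_zero]
  · rintro ⟨h1, h2⟩
    exact h j (by rw [h1, h2, Sym2.eq_swap])
  · rintro ⟨h1, h2⟩
    exact h j (by rw [h1, h2])

/-- real 0/1 adjacency -/
noncomputable def Cc (G : SimpleGraph (Fin N)) [DecidableRel G.Adj] (u v : Fin N) : ℝ :=
  if G.Adj u v then 1 else 0

theorem Cc_symm (G : SimpleGraph (Fin N)) [DecidableRel G.Adj] (u v : Fin N) :
    Cc G u v = Cc G v u := by simp [Cc, G.adj_comm]

theorem schrodOp_apply (G : SimpleGraph (Fin N)) [DecidableRel G.Adj] (q : Fin N → ℝ)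
    (u v : Fin N) : schrodOp G q u v = (if u = v then q u else 0) - Cc G u v := by
  simp [schrodOp, Cc, Matrix.diagonal_apply, SimpleGraph.adjMatrix_apply]

theorem schrodMag_apply (G : SimpleGraph (Fin N)) [DecidableRel G.Adj] (q : Fin N → ℝ)
    (uE vE : Fin β → Fin N) (horder : ∀ j, uE j < vE j)
    (hadj : ∀ j, G.Adj (uE j) (vE j))
    (hdistinct : ∀ i j, s(uE i, vE i) = s(uE j, vE j) → i = j) (α : Fin β → ℝ) (u v : Fin N) :
    schrodMag G q uE vE α u v =
      ((if u = v then q u else 0 : ℝ) : ℂ) -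
        (Cc G u v : ℂ) * Complex.exp (Complex.I * (At uE vE α u v : ℝ)) := by
  unfold schrodMag
  rw [Matrix.add_apply, Matrix.map_apply, schrodOp_apply, Matrix.sum_apply]
  simp only [Matrix.of_apply]
  by_cases h : ∃ j, s(u, v) = s(uE j, vE j)
  · obtain ⟨j, hj⟩ := h
    rw [Finset.sum_eq_single j]
    · rcases Sym2.eq_iff.mp hj with ⟨rfl, rfl⟩ | ⟨rfl, rfl⟩
      · rw [At_edge uE vE horder hdistinct]
        have := (horder j).ne
        simp [this, Cc, hadj j]
        ring
      · rw [At_antisymm, At_edge uE vE horder hdistinct]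
        have := (horder j).ne
        simp [this, this.symm, Cc, (hadj j).symm]
        ring
    · intro i _ hij
      rw [if_neg, if_neg]
      · rintro ⟨h1, h2⟩
        exact hij (hdistinct i j (by rw [← hj, h1, h2, Sym2.eq_swap]))
      · rintro ⟨h1, h2⟩
        exact hij (hdistinct i j (by rw [← hj, h1, h2]))
    · simp
  · push Not at h
    rw [At_non uE vE α u v h, Finset.sum_eq_zero]
    · simp
    · intro j _
      rw [if_neg, if_neg]
      · rintro ⟨h1, h2⟩
        exact h j (by rw [h1, h2, Sym2.eq_swap])
      · rintro ⟨h1, h2⟩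
        exact h j (by rw [h1, h2])

/-- ground state identity, magnetic version -/
theorem ground_mag (C A : Fin N → Fin N → ℝ) (hC : ∀ u v, C u v = C v u) (q f : Fin N → ℝ)
    (l : ℝ) (hf : ∀ u, (q u - l) * f u = ∑ v, C u v * f v) (M : Matrix (Fin N) (Fin N) ℂ)
    (hM : ∀ u v, M u v = ((if u = v then q u else 0 : ℝ) : ℂ) -
      (C u v : ℂ) * Complex.exp (Complex.I * (A u v : ℝ))) (h : Fin N → ℂ) :
    2 * (qf M (fun u => f u * h u) - l * ∑ u, ‖(f u : ℂ) * h u‖ ^ 2) =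
      ∑ u, ∑ v, C u v * (f u * f v) *
        ‖h u - Complex.exp (Complex.I * (A u v : ℝ)) * h v‖ ^ 2 := by
  have e1 : ∀ u v, ‖h u - Complex.exp (Complex.I * (A u v : ℝ)) * h v‖ ^ 2 =
      ‖h u‖ ^ 2 + ‖h v‖ ^ 2 -
        2 * (star (h u) * Complex.exp (Complex.I * (A u v : ℝ)) * h v).re := by
    intro u v
    have hn : Complex.normSq (Complex.exp (Complex.I * (A u v : ℝ))) = 1 := by
      rw [Complex.normSq_eq_norm_sq, mul_comm, Complex.norm_exp_ofReal_mul_I]; norm_num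
    rw [← Complex.normSq_eq_norm_sq, ← Complex.normSq_eq_norm_sq, ← Complex.normSq_eq_norm_sq,
      Complex.normSq_sub, Complex.normSq_mul, hn, one_mul]
    congr 2
    rw [← Complex.conj_re]
    congr 1
    simp only [map_mul, Complex.conj_conj, Complex.star_def]
    ring
  have e2 : qf M (fun u => f u * h u) = ∑ u, q u * f u ^ 2 * ‖h u‖ ^ 2 -
      ∑ u, ∑ v, C u v * (f u * f v) *
        (star (h u) * Complex.exp (Complex.I * (A u v : ℝ)) * h v).re := by
    unfold qf
    simp only [dotProduct, Matrix.mulVec, Pi.star_apply, Finset.mul_sum, hM]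
    rw [← Finset.sum_sub_distrib, map_sum]
    refine Finset.sum_congr rfl fun u _ => ?_
    have : q u * f u ^ 2 * ‖h u‖ ^ 2 =
        ∑ v, if u = v then q u * f u ^ 2 * ‖h u‖ ^ 2 else 0 := by simp
    rw [this, ← Finset.sum_sub_distrib, map_sum]
    refine Finset.sum_congr rfl fun v _ => ?_
    have hh : star ((f u : ℂ) * h u) * ((((if u = v then q u else 0 : ℝ) : ℂ) -
      (C u v : ℂ) * Complex.exp (Complex.I * (A u v : ℝ))) * ((f v : ℂ) * h v)) =
      ((if u = v then q u * f u ^ 2 * ‖h u‖ ^ 2 else 0 : ℝ) : ℂ) -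
      ((C u v * (f u * f v) : ℝ) : ℂ) *
        (star (h u) * Complex.exp (Complex.I * (A u v : ℝ)) * h v) := by
      have hs : star ((f u : ℂ) * h u) = (f u : ℂ) * star (h u) := by simp
      rw [hs]
      by_cases huv : u = v
      · subst huv
        have : star (h u) * h u = ((‖h u‖ ^ 2 : ℝ) : ℂ) := by
          rw [Complex.star_def, Complex.conj_mul']; norm_cast
        simp only [if_true]
        push_cast at this ⊢
        linear_combination (f u : ℂ) ^ 2 * q u * this
      · simp only [if_neg huv]
        push_cast
        ring
    rw [hh]
    rw [RCLike.re_eq_complex_re, Complex.sub_re, Complex.ofReal_re, Complex.re_ofReal_mul]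
  have e3 : ∑ u, ∑ v, C u v * (f u * f v) * ‖h u‖ ^ 2 =
      ∑ u, (q u - l) * f u ^ 2 * ‖h u‖ ^ 2 := by
    refine Finset.sum_congr rfl fun u _ => ?_
    rw [show (q u - l) * f u ^ 2 * ‖h u‖ ^ 2 = ((q u - l) * f u) * (f u * ‖h u‖ ^ 2) by ring,
      hf, Finset.sum_mul]
    refine Finset.sum_congr rfl fun v _ => ?_
    ring
  have e4 : ∑ u, ∑ v, C u v * (f u * f v) * ‖h v‖ ^ 2 =
      ∑ u, (q u - l) * f u ^ 2 * ‖h u‖ ^ 2 := by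
    rw [Finset.sum_comm, ← e3]
    refine Finset.sum_congr rfl fun u _ => Finset.sum_congr rfl fun v _ => ?_
    rw [hC]; ring
  simp only [e1, e2, mul_sub, mul_add, Finset.sum_add_distrib, Finset.sum_sub_distrib, e3, e4,
    norm_mul, mul_pow]
  have e5 : ∑ u, (q u - l) * f u ^ 2 * ‖h u‖ ^ 2 = ∑ u, q u * f u ^ 2 * ‖h u‖ ^ 2 -
      l * ∑ u, ‖(f u : ℂ)‖ ^ 2 * ‖h u‖ ^ 2 := by
    rw [Finset.mul_sum, ← Finset.sum_sub_distrib]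
    refine Finset.sum_congr rfl fun u _ => ?_
    rw [Complex.norm_real, Real.norm_eq_abs, sq_abs]; ring
  rw [e5]
  have e6 : ∀ X : Fin N → Fin N → ℝ, ∑ u, ∑ v, C u v * (f u * f v) * (2 * X u v) =
      2 * ∑ u, ∑ v, C u v * (f u * f v) * X u v := by
    intro X
    simp only [Finset.mul_sum]
    refine Finset.sum_congr rfl fun u _ => Finset.sum_congr rfl fun v _ => ?_
    ring
  rw [e6]
  ring

/-- ground state identity, real bilinear version -/
theorem ground_real (C : Fin N → Fin N → ℝ) (hC : ∀ u v, C u v = C v u) (q f : Fin N → ℝ)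
    (l : ℝ) (hf : ∀ u, (q u - l) * f u = ∑ v, C u v * f v) (η θ : Fin N → ℝ) :
    ∑ u, ∑ v, C u v * (f u * f v) * ((η u - η v) * (θ u - θ v)) =
      2 * ∑ u, f u * η u * ((q u - l) * (f u * θ u) - ∑ v, C u v * (f v * θ v)) := by
  have hs : ∑ u, ∑ v, C u v * (f u * f v) * ((η u - η v) * (θ u - θ v)) =
      2 * ∑ u, ∑ v, C u v * (f u * f v) * (η u * (θ u - θ v)) := by
    have : ∑ u, ∑ v, C u v * (f u * f v) * (η u * (θ u - θ v)) =
      ∑ u, ∑ v, C u v * (f u * f v) * (- η v * (θ u - θ v)) := by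
      rw [Finset.sum_comm]
      refine Finset.sum_congr rfl fun u _ => Finset.sum_congr rfl fun v _ => ?_
      rw [hC]; ring
    rw [two_mul]
    nth_rewrite 2 [this]
    simp only [← Finset.sum_add_distrib]
    refine Finset.sum_congr rfl fun u _ => Finset.sum_congr rfl fun v _ => ?_
    ring
  rw [hs]
  congr 1
  refine Finset.sum_congr rfl fun u _ => ?_
  rw [show (q u - l) * (f u * θ u) = ((q u - l) * f u) * θ u by ring, hf, Finset.sum_mul,
    ← Finset.sum_sub_distrib, Finset.mul_sum]
  refine Finset.sum_congr rfl fun v _ => ?_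
  ring

end NS

namespace NS

open Matrix Topology Filter


theorem simple_real {N : ℕ} (H : Matrix (Fin N) (Fin N) ℝ) (l : ℝ)
    (h1 : Module.finrank ℝ (Module.End.eigenspace (Matrix.toLin' H) l) = 1)
    (f : Fin N → ℝ) (hf : f ≠ 0) (heig : H *ᵥ f = l • f) (y : Fin N → ℝ) (hy : H *ᵥ y = l • y) :
    ∃ c : ℝ, y = c • f := by
  have m : ∀ z, H *ᵥ z = l • z → z ∈ Module.End.eigenspace (Matrix.toLin' H) l := by
    intro z hz
    rw [Module.End.mem_eigenspace_iff, Matrix.toLin'_apply, hz]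
  obtain ⟨c, hc⟩ := (finrank_eq_one_iff_of_nonzero'
    (⟨f, m f heig⟩ : Module.End.eigenspace (Matrix.toLin' H) l) (by
      intro h0; exact hf (congrArg Subtype.val h0))).mp h1 ⟨y, m y hy⟩
  exact ⟨c, (congrArg Subtype.val hc).symm⟩

/-- The bordered matrix is injective. -/
theorem bordered_inj {N : ℕ} (H : Matrix (Fin N) (Fin N) ℝ) (hH : H.IsHermitian) (l : ℝ)
    (h1 : Module.finrank ℝ (Module.End.eigenspace (Matrix.toLin' H) l) = 1)
    (f : Fin N → ℝ) (hf : f ≠ 0) (heig : H *ᵥ f = l • f)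
    (g : Fin N → ℂ) (m : ℂ)
    (hg : ∀ u, ∑ v, (H u v : ℂ) * g v - (l : ℂ) * g u - m * f u = 0)
    (hg2 : ∑ u, (f u : ℂ) * g u = 0) : g = 0 ∧ m = 0 := by
  have hfpos : 0 < ∑ u, f u * f u := by
    have := nsq_pos hf
    simpa [sq] using this
  have hsym : ∀ u v, H u v = H v u := fun u v => by
    have := congrFun (congrFun hH v) u
    simpa using this
  have hfe : ∀ v, ∑ u, (f u : ℂ) * H u v = l * f v := by
    intro v
    have := congrFun heig v
    simp only [Matrix.mulVec, dotProduct, Pi.smul_apply, smul_eq_mul] at this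
    have t : ((∑ u, H v u * f u : ℝ) : ℂ) = ((l * f v : ℝ) : ℂ) := by rw [this]
    push_cast at t
    rw [← t]
    refine Finset.sum_congr rfl fun u _ => ?_
    rw [hsym u v]; ring
  have hm : m = 0 := by
    have e : ∑ u, (f u : ℂ) * (∑ v, (H u v : ℂ) * g v - (l : ℂ) * g u - m * f u) = 0 :=
      Finset.sum_eq_zero fun u _ => by rw [hg]; simp
    have e2 : ∑ u, (f u : ℂ) * ∑ v, (H u v : ℂ) * g v = l * ∑ u, (f u : ℂ) * g u := by
      simp only [Finset.mul_sum]
      rw [Finset.sum_comm]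
      refine Finset.sum_congr rfl fun v _ => ?_
      simp only [← mul_assoc]
      rw [← Finset.sum_mul, hfe]
    have e3 : ∑ u, (f u : ℂ) * (∑ v, (H u v : ℂ) * g v - (l : ℂ) * g u - m * f u) =
      ∑ u, (f u : ℂ) * ∑ v, (H u v : ℂ) * g v - l * ∑ u, (f u : ℂ) * g u
        - m * ∑ u, (f u : ℂ) * f u := by
      rw [Finset.mul_sum, Finset.mul_sum, ← Finset.sum_sub_distrib, ← Finset.sum_sub_distrib]
      refine Finset.sum_congr rfl fun v _ => ?_
      ring
    rw [e3, e2, sub_self, zero_sub, neg_eq_zero] at e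
    rcases mul_eq_zero.mp e with h | h
    · exact h
    · exfalso
      have : ((∑ u, f u * f u : ℝ) : ℂ) = 0 := by push_cast; exact h
      rw [Complex.ofReal_eq_zero] at this
      exact hfpos.ne' this
  refine ⟨?_, hm⟩
  subst hm
  have hre : H *ᵥ (fun u => (g u).re) = l • (fun u => (g u).re) := by
    ext u
    have := congrArg Complex.re (hg u)
    simp [Complex.re_sum] at this
    simp only [Matrix.mulVec, dotProduct, Pi.smul_apply, smul_eq_mul]
    linarith
  have him : H *ᵥ (fun u => (g u).im) = l • (fun u => (g u).im) := by
    ext u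
    have := congrArg Complex.im (hg u)
    simp [Complex.im_sum] at this
    simp only [Matrix.mulVec, dotProduct, Pi.smul_apply, smul_eq_mul]
    linarith
  obtain ⟨c, hc⟩ := simple_real H l h1 f hf heig _ hre
  obtain ⟨c', hc'⟩ := simple_real H l h1 f hf heig _ him
  have z : ∀ (c : ℝ) (y : Fin N → ℝ), y = c • f → ∑ u, f u * y u = 0 → y = 0 := by
    intro c y hy h0
    subst hy
    have : c * ∑ u, f u * f u = 0 := by
      rw [← h0, Finset.mul_sum]
      refine Finset.sum_congr rfl fun v _ => ?_
      simp; ring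
    rcases mul_eq_zero.mp this with h | h
    · simp [h]
    · exact absurd h hfpos.ne'
  have z1 := z c _ hc (by
    have := congrArg Complex.re hg2
    simpa [Complex.re_sum] using this)
  have z2 := z c' _ hc' (by
    have := congrArg Complex.im hg2
    simpa [Complex.im_sum] using this)
  ext u
  exact Complex.ext (congrFun z1 u) (congrFun z2 u)

theorem smooth_branch {P : Type*} [NormedAddCommGroup P] [NormedSpace ℝ P] [CompleteSpace P]
    {N : ℕ} (M : P → Matrix (Fin N) (Fin N) ℂ)
    (hM : ∀ i j, ContDiff ℝ 2 (fun α => M α i j)) (hH : ∀ α, (M α).IsHermitian)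
    (H : Matrix (Fin N) (Fin N) ℝ) (hHs : H.IsHermitian) (h0 : M 0 = H.map (fun x => (x : ℂ)))
    (k : Fin N) (l : ℝ) (hl : sortedEigs H k = l)
    (h1 : Module.finrank ℝ (Module.End.eigenspace (Matrix.toLin' H) l) = 1)
    (f : Fin N → ℝ) (hf : f ≠ 0) (heig : H *ᵥ f = l • f) :
    ∃ g : P → Fin N → ℂ, ContDiffAt ℝ 2 g 0 ∧ (∀ u, g 0 u = f u) ∧
      ContDiffAt ℝ 2 (fun α => sortedEigs (M α) k) 0 ∧
      ∀ᶠ α in 𝓝 0, M α *ᵥ g α = (sortedEigs (M α) k : ℂ) • g α := by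
  let F : P × ((Fin N → ℂ) × ℂ) → (Fin N → ℂ) × ℂ := fun p =>
    (fun u => ∑ v, M p.1 u v * p.2.1 v - p.2.2 * p.2.1 u, ∑ u, (f u : ℂ) * p.2.1 u)
  have hF : ContDiff ℝ 2 F := by
    refine ContDiff.prodMk ?_ ?_
    · rw [contDiff_pi]
      intro u
      have : ∀ v, ContDiff ℝ 2 (fun p : P × ((Fin N → ℂ) × ℂ) => M p.1 u v) := fun v =>
        (hM u v).comp contDiff_fst
      fun_prop
    · fun_prop
  let u₀ : P × ((Fin N → ℂ) × ℂ) := (0, (fun u => (f u : ℂ)), (l : ℂ))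
  let D : ((Fin N → ℂ) × ℂ) →ₗ[ℝ] (Fin N → ℂ) × ℂ :=
    { toFun := fun p => (fun u => ∑ v, (H u v : ℂ) * p.1 v - (l : ℂ) * p.1 u - p.2 * f u,
        ∑ u, (f u : ℂ) * p.1 u)
      map_add' := by
        intro a b
        ext
        · simp [mul_add, Finset.sum_add_distrib]; ring
        · simp [mul_add, Finset.sum_add_distrib]
      map_smul' := by
        intro a b
        ext
        · simp [Finset.mul_sum, mul_sub]
          congr 1
          · congr 1
            · exact Finset.sum_congr rfl fun v _ => by ring
            · ring
          · ring
        · simp [Finset.mul_sum]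
          exact Finset.sum_congr rfl fun v _ => by ring }
  have hDinj : Function.Injective D := by
    rw [injective_iff_map_eq_zero]
    rintro ⟨g, m⟩ hgm
    have e1 : ∀ u, ∑ v, (H u v : ℂ) * g v - (l : ℂ) * g u - m * f u = 0 := fun u =>
      congrFun (congrArg Prod.fst hgm) u
    have e2 : ∑ u, (f u : ℂ) * g u = 0 := congrArg Prod.snd hgm
    obtain ⟨rfl, rfl⟩ := bordered_inj H hHs l h1 f hf heig g m e1 e2
    rfl
  have hder : (fderiv ℝ F u₀ ∘L .inr ℝ P ((Fin N → ℂ) × ℂ)) = D.toContinuousLinearMap := by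
    have hd : HasFDerivAt F (fderiv ℝ F u₀) u₀ :=
      (hF.differentiable (by norm_num)).differentiableAt.hasFDerivAt
    refine ContinuousLinearMap.ext fun p => ?_
    have hline : HasDerivAt (fun t : ℝ => u₀ + t • (0, p)) ((0 : P), p) 0 := by
      simpa using ((hasDerivAt_id (0 : ℝ)).smul_const ((0 : P), p)).const_add u₀
    have hd' : HasFDerivAt F (fderiv ℝ F u₀) (u₀ + (0 : ℝ) • ((0 : P), p)) := by simpa using hd
    have c1 := hd'.comp_hasDerivAt (0 : ℝ) hline
    have e : ∀ t : ℝ, F (u₀ + t • (0, p)) = F u₀ + t • D p - (t ^ 2) • ((fun u => p.2 * p.1 u), (0 : ℂ)) := by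
      intro t
      ext
      · rename_i u
        have hsum : ∑ v, (H u v : ℂ) * ((f v : ℂ) + (t : ℂ) * p.1 v) =
            ∑ v, (H u v : ℂ) * (f v : ℂ) + (t : ℂ) * ∑ v, (H u v : ℂ) * p.1 v := by
          rw [Finset.mul_sum, ← Finset.sum_add_distrib]
          exact Finset.sum_congr rfl fun v _ => by ring
        simp [F, u₀, D, h0]
        rw [hsum]
        ring
      · simp [F, u₀, D, h0, mul_add, Finset.sum_add_distrib, Finset.mul_sum]
        exact Finset.sum_congr rfl fun v _ => by ring
    have c2 : HasDerivAt (fun t : ℝ => F (u₀ + t • (0, p))) (D p) 0 := by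
      simp only [e]
      have a1 := ((hasDerivAt_id (0 : ℝ)).smul_const (D p)).const_add (F u₀)
      have a2 := (hasDerivAt_pow 2 (0 : ℝ)).smul_const (((fun u => p.2 * p.1 u), (0 : ℂ)) : (Fin N → ℂ) × ℂ)
      exact (a1.sub a2).congr_deriv (by simp)
    exact c1.unique c2
  have hinv : (fderiv ℝ F u₀ ∘L .inr ℝ P ((Fin N → ℂ) × ℂ)).IsInvertible := by
    rw [hder]
    refine ⟨(LinearEquiv.ofInjectiveEndo D hDinj).toContinuousLinearEquiv, ?_⟩
    refine ContinuousLinearMap.ext fun p => ?_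
    rfl
  have cdf : ContDiffAt ℝ 2 F u₀ := hF.contDiffAt
  let ψ := cdf.implicitFunction (by norm_num) hinv
  have hψ0 : ψ 0 = u₀.2 := cdf.implicitFunction_apply_self (by norm_num) hinv
  have hψe : ∀ᶠ x in 𝓝 (0 : P), F (x, ψ x) = F u₀ :=
    cdf.eventually_apply_implicitFunction (by norm_num) hinv
  have hψc : ContDiffAt ℝ 2 ψ 0 := cdf.contDiffAt_implicitFunction (by norm_num) hinv
  have hFu0 : ∀ u, (F u₀).1 u = 0 := by
    intro u
    have := congrFun heig u
    simp only [Matrix.mulVec, dotProduct, Pi.smul_apply, smul_eq_mul] at this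
    have t : ((∑ v, H u v * f v : ℝ) : ℂ) = ((l * f u : ℝ) : ℂ) := by rw [this]
    push_cast at t
    simp [F, u₀, h0, t]
  have heq : ∀ᶠ α in 𝓝 (0 : P), M α *ᵥ (ψ α).1 = (ψ α).2 • (ψ α).1 := by
    filter_upwards [hψe] with α hα
    ext u
    have := (congrFun (congrArg Prod.fst hα) u).trans (hFu0 u)
    simp only [F] at this
    simp only [Matrix.mulVec, dotProduct, Pi.smul_apply, smul_eq_mul]
    exact sub_eq_zero.mp this
  have hψcont : ContinuousAt ψ 0 := hψc.continuousAt
  have hne : ∀ᶠ α in 𝓝 (0 : P), (ψ α).1 ≠ 0 := by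
    have : ContinuousAt (fun α => (ψ α).1) 0 := by fun_prop
    refine this.eventually_ne ?_
    rw [hψ0]
    intro h
    apply hf
    ext u
    have := congrFun h u
    simpa [u₀] using this
  have hs0 : ∀ i, sortedEigs (M 0) i = sortedEigs H i := by
    intro i; rw [h0, sorted_map H hHs]
  have hk : ∀ᶠ α in 𝓝 (0 : P), ∀ i, i ≠ k → (sortedEigs (M α) i : ℂ) ≠ (ψ α).2 := by
    rw [Filter.eventually_all]
    intro i
    by_cases hik : i = k
    · simp [hik]
    have c1 : ContinuousAt (fun α => (sortedEigs (M α) i : ℂ)) 0 :=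
      Complex.continuous_ofReal.continuousAt.comp
        (sorted_continuousAt M hH 0 (fun a b => (hM a b).continuous.continuousAt) i)
    have c2 : ContinuousAt (fun α => (ψ α).2) 0 := by fun_prop
    have := (c1.sub c2).eventually_ne (y := 0) (by
      change (sortedEigs (M 0) i : ℂ) - (ψ 0).2 ≠ 0
      rw [hψ0, hs0]
      simp only [u₀]
      rw [sub_ne_zero]
      intro h
      exact hik (sorted_inj H hHs l h1 i k (by exact_mod_cast h) hl))
    filter_upwards [this] with α hα _
    exact sub_ne_zero.mp hα
  have hlam : ∀ᶠ α in 𝓝 (0 : P), (sortedEigs (M α) k : ℂ) = (ψ α).2 := by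
    filter_upwards [heq, hne, hk] with α a1 a2 a3
    obtain ⟨i, hi⟩ := exists_sorted (M α) (hH α) _ _ a2 a1
    by_cases hik : i = k
    · rw [← hik]; exact hi
    · exact absurd hi (a3 i hik)
  refine ⟨fun α => (ψ α).1, hψc.fst, ?_, ?_, ?_⟩
  · intro u; simp only [hψ0, u₀]
  · have : ContDiffAt ℝ 2 (fun α => ((ψ α).2).re) 0 :=
      Complex.reCLM.contDiff.contDiffAt.comp 0 hψc.snd
    refine this.congr_of_eventuallyEq ?_
    filter_upwards [hlam] with α h
    rw [← h]; simp
  · filter_upwards [heq, hlam] with α a1 a2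
    rw [a2, a1]

end NS

namespace NS

open Matrix Topology Filter


theorem hess_apply {k : ℕ} (lam : (Fin k → ℝ) → ℝ) (h : ContDiffAt ℝ 2 lam 0) (i j : Fin k) :
    hessMat lam 0 i j = fderiv ℝ (fderiv ℝ lam) 0 (Pi.single i 1) (Pi.single j 1) := by
  have hd : DifferentiableAt ℝ (fderiv ℝ lam) 0 :=
    (h.fderiv_right (m := 1) (by norm_num)).differentiableAt (by norm_num)
  unfold hessMat
  rw [Matrix.of_apply, fderiv_clm_apply hd (differentiableAt_const _)]
  simp

theorem hess_symm {k : ℕ} (lam : (Fin k → ℝ) → ℝ) (h : ContDiffAt ℝ 2 lam 0) :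
    (hessMat lam 0).IsHermitian := by
  ext i j
  have hs : IsSymmSndFDerivAt ℝ lam 0 := h.isSymmSndFDerivAt (by simp)
  rw [Matrix.conjTranspose_apply, hess_apply lam h, hess_apply lam h]
  simp [hs.eq (Pi.single j 1) (Pi.single i 1)]

theorem hess_quad {k : ℕ} (lam : (Fin k → ℝ) → ℝ) (h : ContDiffAt ℝ 2 lam 0) (x : Fin k → ℝ) :
    qf (hessMat lam 0) x = fderiv ℝ (fderiv ℝ lam) 0 x x := by
  have hx : x = ∑ i, x i • (Pi.single i 1 : Fin k → ℝ) := by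
    ext j
    simp [Finset.sum_apply, Pi.single_apply]
  have : fderiv ℝ (fderiv ℝ lam) 0 x x = ∑ i, ∑ j, x i * (x j *
      fderiv ℝ (fderiv ℝ lam) 0 (Pi.single i 1) (Pi.single j 1)) := by
    conv_lhs => rw [hx]
    simp only [map_sum, map_smul, _root_.sum_apply, _root_.smul_apply,
      smul_eq_mul, Finset.mul_sum]
    rw [Finset.sum_comm]
    refine Finset.sum_congr rfl fun i _ => Finset.sum_congr rfl fun j _ => ?_
    ring
  rw [this]
  simp only [qf, dotProduct, Matrix.mulVec, Finset.mul_sum, hess_apply lam h, Pi.star_apply,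
    star_trivial, RCLike.re_to_real]
  refine Finset.sum_congr rfl fun i _ => Finset.sum_congr rfl fun j _ => ?_
  ring

theorem second_deriv {k : ℕ} (lam : (Fin k → ℝ) → ℝ) (h : ContDiffAt ℝ 2 lam 0)
    (h0 : fderiv ℝ lam 0 = 0) (x : Fin k → ℝ) (L : ℝ)
    (hL : Tendsto (fun t : ℝ => (lam (t • x) - lam 0) / t ^ 2) (𝓝[≠] 0) (𝓝 L)) :
    fderiv ℝ (fderiv ℝ lam) 0 x x = 2 * L := by
  have hd : DifferentiableAt ℝ (fderiv ℝ lam) 0 :=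
    (h.fderiv_right (m := 1) (by norm_num)).differentiableAt (by norm_num)
  have hline : ∀ s : ℝ, HasDerivAt (fun t : ℝ => t • x) x s := fun s => by
    simpa using (hasDerivAt_id s).smul_const x
  have hlt : Tendsto (fun t : ℝ => t • x) (𝓝 0) (𝓝 0) := by
    have := (hline 0).continuousAt.tendsto
    simpa using this
  have hev : ∀ᶠ y in 𝓝 (0 : Fin k → ℝ), DifferentiableAt ℝ lam y := by
    filter_upwards [h.eventually (by norm_num)] with y hy
    exact hy.differentiableAt (by norm_num)
  have hff : ∀ᶠ t in 𝓝[≠] (0 : ℝ), HasDerivAt (fun t : ℝ => lam (t • x) - lam 0)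
      (fderiv ℝ lam (t • x) x) t := by
    filter_upwards [(hlt.eventually hev).filter_mono nhdsWithin_le_nhds] with t ht
    exact (ht.hasFDerivAt.comp_hasDerivAt t (hline t)).sub_const _
  have hgg : ∀ᶠ t in 𝓝[≠] (0 : ℝ), HasDerivAt (fun t : ℝ => t ^ 2) (2 * t) t :=
    Eventually.of_forall fun t => by simpa using hasDerivAt_pow 2 t
  have hsl : HasDerivAt (fun t : ℝ => fderiv ℝ lam (t • x) x)
      (fderiv ℝ (fderiv ℝ lam) 0 x x) 0 := by
    have hd' : HasFDerivAt (fderiv ℝ lam) (fderiv ℝ (fderiv ℝ lam) 0) ((0 : ℝ) • x) := by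
      simpa using hd.hasFDerivAt
    have h1 : HasDerivAt (fun t : ℝ => fderiv ℝ lam (t • x)) (fderiv ℝ (fderiv ℝ lam) 0 x) 0 :=
      hd'.comp_hasDerivAt (0 : ℝ) (hline 0)
    exact (ContinuousLinearMap.apply ℝ ℝ x).hasFDerivAt.comp_hasDerivAt (0 : ℝ) h1
  have hdiv : Tendsto (fun t : ℝ => fderiv ℝ lam (t • x) x / (2 * t)) (𝓝[≠] 0)
      (𝓝 (fderiv ℝ (fderiv ℝ lam) 0 x x / 2)) := by
    have := (hasDerivAt_iff_tendsto_slope_zero.mp hsl).div_const 2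
    refine this.congr fun t => ?_
    simp only [zero_add, zero_smul, h0, _root_.zero_apply, sub_zero, smul_eq_mul]
    rw [div_mul_eq_div_div_swap, div_eq_mul_inv _ t]; ring
  have hlim := HasDerivAt.lhopital_zero_nhdsNE hff hgg
    (by filter_upwards [self_mem_nhdsWithin] with t ht; simpa using ht)
    (by
      have : ContinuousAt (fun t : ℝ => lam (t • x) - lam 0) 0 := by
        have hc : ContinuousAt lam ((0 : ℝ) • x) := by simpa using h.continuousAt
        exact (hc.comp (f := fun t : ℝ => t • x) (hline 0).continuousAt).sub continuousAt_const
      have := this.tendsto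
      simp only [zero_smul, sub_self] at this
      exact this.mono_left nhdsWithin_le_nhds)
    (by
      have : ContinuousAt (fun t : ℝ => t ^ 2) 0 := by fun_prop
      have := this.tendsto
      norm_num at this
      exact this.mono_left nhdsWithin_le_nhds) hdiv
  have := tendsto_nhds_unique hL hlim
  linarith

theorem even_fderiv {k : ℕ} (lam : (Fin k → ℝ) → ℝ) (h : ∀ a, lam (-a) = lam a) :
    fderiv ℝ lam 0 = 0 := by
  by_cases hd : DifferentiableAt ℝ lam 0
  · have e : (fun a => lam (-a)) = lam := funext h
    have h1 : HasFDerivAt lam (fderiv ℝ lam 0) (-(0 : Fin k → ℝ)) := by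
      simpa using hd.hasFDerivAt
    have h2 := h1.comp (0 : Fin k → ℝ) ((hasFDerivAt_id (𝕜 := ℝ) (0 : Fin k → ℝ)).neg)
    have h3 : HasFDerivAt lam ((fderiv ℝ lam 0).comp
        (-(ContinuousLinearMap.id ℝ (Fin k → ℝ)))) 0 := by
      have e2 : lam ∘ Neg.neg = lam := e
      rw [e2] at h2
      exact h2
    have h4 := hd.hasFDerivAt.unique h3
    ext y
    have h5 := congrArg (fun L : (Fin k → ℝ) →L[ℝ] ℝ => L y) h4
    simp at h5
    simp
    linarith
  · exact fderiv_zero_of_not_differentiableAt hd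

theorem sorted_transpose {d : ℕ} (M : Matrix (Fin d) (Fin d) ℂ) (hM : M.IsHermitian) :
    sortedEigs Mᵀ = sortedEigs M := by
  have h5 : hM.transpose.eigenvalues = hM.eigenvalues := by
    rw [Matrix.IsHermitian.eigenvalues_eq_eigenvalues_iff, Matrix.charpoly_transpose]
  simp only [sortedEigs, dif_pos hM, dif_pos hM.transpose, h5]

variable {N β : ℕ}

theorem hess_form (C : Fin N → Fin N → ℝ) (hC : ∀ u v, C u v = C v u) (q f : Fin N → ℝ)
    (hf0 : ∀ u, f u ≠ 0) (hN : 0 < ∑ u, f u ^ 2)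
    (l : ℝ) (hf : ∀ u, (q u - l) * f u = ∑ v, C u v * f v)
    (A : (Fin β → ℝ) → Fin N → Fin N → ℝ) (hAa : ∀ x u v, A x v u = - A x u v)
    (hAs : ∀ (t : ℝ) x u v, A (t • x) u v = t * A x u v)
    (M : (Fin β → ℝ) → Matrix (Fin N) (Fin N) ℂ)
    (hM : ∀ α u v, M α u v = ((if u = v then q u else 0 : ℝ) : ℂ) -
      (C u v : ℂ) * Complex.exp (Complex.I * (A α u v : ℝ)))
    (lam : (Fin β → ℝ) → ℝ) (hlam : ContDiffAt ℝ 2 lam 0) (hlam0 : lam 0 = l)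
    (hder : fderiv ℝ lam 0 = 0)
    (g : (Fin β → ℝ) → Fin N → ℂ) (hg : DifferentiableAt ℝ g 0) (hg0 : ∀ u, g 0 u = f u)
    (heig : ∀ᶠ α in 𝓝 0, M α *ᵥ g α = (lam α : ℂ) • g α) (x : Fin β → ℝ) :
    (qf (hessMat lam 0) x * ∑ u, f u ^ 2 = ∑ u, ∑ v, C u v * (f u * f v) *
      ((fderiv ℝ g 0 x u).im / f u - (fderiv ℝ g 0 x v).im / f v - A x u v) ^ 2) ∧
    (∀ η : Fin N → ℝ, ∑ u, ∑ v, C u v * (f u * f v) * ((η u - η v) *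
      ((fderiv ℝ g 0 x u).im / f u - (fderiv ℝ g 0 x v).im / f v - A x u v)) = 0) := by
  have hfc : ∀ u, (f u : ℂ) ≠ 0 := fun u => by exact_mod_cast hf0 u
  have hline : HasDerivAt (fun t : ℝ => t • x) x 0 := by
    simpa using (hasDerivAt_id (0 : ℝ)).smul_const x
  have hlt : Tendsto (fun t : ℝ => t • x) (𝓝 0) (𝓝 0) := by
    have := hline.continuousAt.tendsto
    simpa using this
  have hgd : ∀ u, HasDerivAt (fun t : ℝ => g (t • x) u) (fderiv ℝ g 0 x u) 0 := by
    have hd' : HasFDerivAt g (fderiv ℝ g 0) ((0 : ℝ) • x) := by simpa using hg.hasFDerivAt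
    have := hd'.comp_hasDerivAt (0 : ℝ) hline
    exact fun u => (hasDerivAt_pi.mp this) u
  have hlamd : HasDerivAt (fun t : ℝ => (lam (t • x) : ℂ)) 0 0 := by
    have hd' : HasFDerivAt lam (fderiv ℝ lam 0) ((0 : ℝ) • x) := by
      simpa using (hlam.differentiableAt (by norm_num)).hasFDerivAt
    have := (hd'.comp_hasDerivAt (0 : ℝ) hline).ofReal_comp
    simpa [hder] using this
  have hexp : ∀ u v, HasDerivAt (fun t : ℝ => Complex.exp (Complex.I * (A (t • x) u v : ℝ)))
      (Complex.I * (A x u v : ℝ)) 0 := by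
    intro u v
    have h1 : HasDerivAt (fun t : ℝ => Complex.I * ((t * A x u v : ℝ) : ℂ))
        (Complex.I * (A x u v : ℝ)) 0 := by
      have := ((hasDerivAt_id (0 : ℝ)).mul_const (A x u v)).ofReal_comp.const_mul Complex.I
      simpa using this
    have := h1.cexp
    simpa [hAs] using this
  have hA0 : ∀ u v, A 0 u v = 0 := fun u v => by
    have := hAs 0 0 u v
    simpa using this
  set G := fderiv ℝ g 0 x with hG
  have hevt : ∀ᶠ t in 𝓝 (0 : ℝ), M (t • x) *ᵥ g (t • x) = (lam (t • x) : ℂ) • g (t • x) :=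
    hlt.eventually heig
  -- first order equation
  have hfirst : ∀ u, (q u : ℂ) * G u - ∑ v, (C u v : ℂ) * G v
      - Complex.I * ∑ v, (C u v : ℂ) * (A x u v : ℂ) * f v = l * G u := by
    intro u
    have d1 : HasDerivAt (fun t : ℝ => ∑ v, M (t • x) u v * g (t • x) v)
        (∑ v, (-((C u v : ℂ) * (Complex.I * (A x u v : ℝ))) * f v +
          (((if u = v then q u else 0 : ℝ) : ℂ) - (C u v : ℂ)) * G v)) 0 := by
      refine HasDerivAt.fun_sum fun v _ => ?_
      simp only [hM]
      have := (((hexp u v).const_mul (C u v : ℂ)).const_sub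
        ((if u = v then q u else 0 : ℝ) : ℂ)).mul (hgd v)
      refine this.congr_deriv ?_
      simp [hA0, hg0]
    have d2 : HasDerivAt (fun t : ℝ => (lam (t • x) : ℂ) * g (t • x) u) (l * G u) 0 := by
      refine (hlamd.mul (hgd u)).congr_deriv ?_
      simp [hlam0]
    have d3 : HasDerivAt (fun t : ℝ => ∑ v, M (t • x) u v * g (t • x) v) (l * G u) 0 := by
      refine d2.congr_of_eventuallyEq ?_
      filter_upwards [hevt] with t ht
      have := congrFun ht u
      simpa [Matrix.mulVec, dotProduct] using this
    have e := d1.unique d3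
    rw [← e, Finset.sum_add_distrib]
    have e1 : ∑ v, (((if u = v then q u else 0 : ℝ) : ℂ) - (C u v : ℂ)) * G v =
        (q u : ℂ) * G u - ∑ v, (C u v : ℂ) * G v := by
      simp only [sub_mul, Finset.sum_sub_distrib]
      congr 1
      rw [Finset.sum_eq_single u]
      · simp
      · intro b _ hb; simp [Ne.symm hb]
      · simp
    rw [e1, Finset.mul_sum]
    have e2 : ∑ v, -((C u v : ℂ) * (Complex.I * (A x u v : ℝ))) * f v =
        - ∑ v, Complex.I * ((C u v : ℂ) * (A x u v : ℂ) * f v) := by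
      rw [← Finset.sum_neg_distrib]
      exact Finset.sum_congr rfl fun v _ => by ring
    rw [e2]; ring
  have hS : ∀ u, ∑ v, (C u v : ℂ) * (A x u v : ℂ) * f v =
      ((∑ v, C u v * A x u v * f v : ℝ) : ℂ) := fun u => by push_cast; rfl
  have hre : ∀ u, (q u - l) * (G u).re - ∑ v, C u v * (G v).re = 0 := by
    intro u
    have := congrArg Complex.re (hfirst u)
    rw [hS] at this
    simp [Complex.re_sum] at this
    linarith
  have him : ∀ u, (q u - l) * (G u).im - ∑ v, C u v * (G v).im = ∑ v, C u v * A x u v * f v := by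
    intro u
    have := congrArg Complex.im (hfirst u)
    rw [hS] at this
    simp only [Complex.sub_im, Complex.im_sum, Complex.mul_im, Complex.I_re,
      Complex.I_im, Complex.ofReal_re, Complex.ofReal_im, zero_mul, add_zero, zero_add, one_mul,
      mul_zero] at this
    linarith
  have hcan : ∀ u (y : ℝ), f u * (y / f u) = y := fun u y => mul_div_cancel₀ _ (hf0 u)
  refine ⟨?_, ?_⟩
  · -- second order
    have hk : ∀ u v, HasDerivAt (fun t : ℝ => g (t • x) u / f u -
        Complex.exp (Complex.I * (A (t • x) u v : ℝ)) * (g (t • x) v / f v))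
        (G u / f u - G v / f v - Complex.I * (A x u v : ℝ)) 0 := by
      intro u v
      have := ((hgd u).div_const (f u : ℂ)).sub ((hexp u v).mul ((hgd v).div_const (f v : ℂ)))
      refine this.congr_deriv ?_
      simp [hA0, hg0, hfc]
      ring
    have hk2 : ∀ u v, Tendsto (fun t : ℝ => ‖g (t • x) u / f u -
        Complex.exp (Complex.I * (A (t • x) u v : ℝ)) * (g (t • x) v / f v)‖ ^ 2 / t ^ 2) (𝓝[≠] 0)
        (𝓝 (‖G u / f u - G v / f v - Complex.I * (A x u v : ℝ)‖ ^ 2)) := by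
      intro u v
      have := ((hasDerivAt_iff_tendsto_slope_zero.mp (hk u v)).norm).pow 2
      refine this.congr fun t => ?_
      simp only [zero_add, zero_smul, hg0, hA0]
      rw [div_self (hfc u), div_self (hfc v)]
      simp [mul_pow, div_eq_inv_mul]
    have hn : Tendsto (fun t : ℝ => ∑ u, ‖g (t • x) u‖ ^ 2) (𝓝[≠] 0) (𝓝 (∑ u, f u ^ 2)) := by
      refine tendsto_finsetSum _ fun u _ => ?_
      have := (((hgd u).continuousAt.tendsto.norm).pow 2).mono_left
        (nhdsWithin_le_nhds (s := {(0 : ℝ)}ᶜ))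
      simpa [hg0] using this
    have hsum : Tendsto (fun t : ℝ => (∑ u, ∑ v, C u v * (f u * f v) * (‖g (t • x) u / f u -
        Complex.exp (Complex.I * (A (t • x) u v : ℝ)) * (g (t • x) v / f v)‖ ^ 2 / t ^ 2)) /
          (2 * ∑ u, ‖g (t • x) u‖ ^ 2)) (𝓝[≠] 0)
        (𝓝 ((∑ u, ∑ v, C u v * (f u * f v) *
          ‖G u / f u - G v / f v - Complex.I * (A x u v : ℝ)‖ ^ 2) / (2 * ∑ u, f u ^ 2))) := by
      refine Tendsto.div ?_ (hn.const_mul 2) (by positivity)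
      exact tendsto_finsetSum _ fun u _ => tendsto_finsetSum _ fun v _ => (hk2 u v).const_mul _
    have hL : Tendsto (fun t : ℝ => (lam (t • x) - lam 0) / t ^ 2) (𝓝[≠] 0)
        (𝓝 ((∑ u, ∑ v, C u v * (f u * f v) *
          ‖G u / f u - G v / f v - Complex.I * (A x u v : ℝ)‖ ^ 2) / (2 * ∑ u, f u ^ 2))) := by
      refine hsum.congr' ?_
      filter_upwards [hevt.filter_mono nhdsWithin_le_nhds, hn.eventually_ne hN.ne',
        self_mem_nhdsWithin] with t ht hnt ht0
      have gm := ground_mag C (A (t • x)) hC q f l hf (M (t • x)) (hM _)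
        (fun u => g (t • x) u / f u)
      have e1 : ∀ u, (f u : ℂ) * (g (t • x) u / f u) = g (t • x) u := fun u =>
        mul_div_cancel₀ _ (hfc u)
      simp only [e1] at gm
      have e2 : qf (M (t • x)) (fun u => g (t • x) u) =
          lam (t • x) * ∑ u, ‖g (t • x) u‖ ^ 2 := by
        unfold qf
        rw [show (fun u => g (t • x) u) = g (t • x) from rfl, ht, dotProduct_smul, smul_eq_mul]
        have : star (g (t • x)) ⬝ᵥ g (t • x) = ((∑ u, ‖g (t • x) u‖ ^ 2 : ℝ) : ℂ) := by
          simp only [dotProduct, Pi.star_apply]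
          push_cast
          refine Finset.sum_congr rfl fun u _ => ?_
          rw [Complex.star_def, Complex.conj_mul']
        rw [this, RCLike.re_eq_complex_re, ← Complex.ofReal_mul, Complex.ofReal_re]
      rw [e2] at gm
      have ht0' : t ≠ 0 := ht0
      have e6 : ∀ X : Fin N → Fin N → ℝ, ∑ u, ∑ v, C u v * (f u * f v) * (X u v / t ^ 2) =
          (∑ u, ∑ v, C u v * (f u * f v) * X u v) / t ^ 2 := by
        intro X
        simp only [Finset.sum_div]
        exact Finset.sum_congr rfl fun u _ => Finset.sum_congr rfl fun v _ => by ring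
      rw [e6 (fun u v => ‖g (t • x) u / f u -
        Complex.exp (Complex.I * (A (t • x) u v : ℝ)) * (g (t • x) v / f v)‖ ^ 2), ← gm, hlam0]
      field_simp
    have h2 := second_deriv lam hlam hder x _ hL
    rw [hess_quad lam hlam, h2]
    have e3 : ∀ u v, ‖G u / f u - G v / f v - Complex.I * (A x u v : ℝ)‖ ^ 2 =
        ((G u).re / f u - (G v).re / f v) * ((G u).re / f u - (G v).re / f v) +
          ((G u).im / f u - (G v).im / f v - A x u v) ^ 2 := by
      intro u v
      rw [← Complex.normSq_eq_norm_sq, Complex.normSq_apply]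
      simp only [Complex.sub_re, Complex.sub_im, Complex.div_ofReal_re, Complex.div_ofReal_im,
        Complex.mul_re, Complex.mul_im, Complex.I_re, Complex.I_im, Complex.ofReal_re,
        Complex.ofReal_im]
      ring
    have e4 := ground_real C hC q f l hf (fun u => (G u).re / f u) (fun u => (G u).re / f u)
    simp only [hcan, hre] at e4
    simp only [e3, mul_add, Finset.sum_add_distrib]
    rw [e4]
    simp only [mul_zero, Finset.sum_const_zero, zero_add]
    field_simp
  · intro η
    have e4 := ground_real C hC q f l hf η (fun u => (G u).im / f u)
    simp only [hcan, him] at e4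
    have e5 : ∑ u, ∑ v, C u v * (f u * f v) * ((η u - η v) * A x u v) =
        2 * ∑ u, f u * η u * ∑ v, C u v * A x u v * f v := by
      have a1 : ∑ u, ∑ v, C u v * (f u * f v) * (η u * A x u v) =
          ∑ u, f u * η u * ∑ v, C u v * A x u v * f v := by
        refine Finset.sum_congr rfl fun u _ => ?_
        rw [Finset.mul_sum]
        exact Finset.sum_congr rfl fun v _ => by ring
      have a2 : ∑ u, ∑ v, C u v * (f u * f v) * (η v * A x u v) =
          - ∑ u, ∑ v, C u v * (f u * f v) * (η u * A x u v) := by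
        rw [Finset.sum_comm]
        simp only [← Finset.sum_neg_distrib]
        refine Finset.sum_congr rfl fun u _ => Finset.sum_congr rfl fun v _ => ?_
        rw [hC, hAa]; ring
      simp only [sub_mul, mul_sub, Finset.sum_sub_distrib]
      rw [a2, a1]; ring
    simp only [mul_sub (_ - _) (_ - _) (A x _ _), mul_sub (_ * _) ((_ - _) * (_ - _)) _,
      Finset.sum_sub_distrib]
    rw [e4, e5, sub_self]

end NS

namespace NS

open Matrix Topology Filter


theorem sum_def_neg {ι : Type*} [Fintype ι] (d z : ι → ℝ) (h : ∀ i, z i ≠ 0 → d i < 0) :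
    ∑ i, d i * z i ^ 2 ≤ 0 ∧ (∑ i, d i * z i ^ 2 = 0 → z = 0) := by
  have h1 : ∀ i, d i * z i ^ 2 ≤ 0 := fun i => by
    by_cases hz : z i = 0
    · simp [hz]
    · exact mul_nonpos_of_nonpos_of_nonneg (h i hz).le (sq_nonneg _)
  refine ⟨Finset.sum_nonpos fun i _ => h1 i, fun h0 => ?_⟩
  rw [Finset.sum_eq_zero_iff_of_nonpos fun i _ => h1 i] at h0
  ext i
  by_contra hz
  have := h0 i (Finset.mem_univ i)
  rcases mul_eq_zero.mp this with h2 | h2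
  · exact (h i hz).ne h2
  · exact hz (pow_eq_zero_iff (by norm_num) |>.mp h2)

theorem sum_def_pos {ι : Type*} [Fintype ι] (d z : ι → ℝ) (h : ∀ i, z i ≠ 0 → 0 < d i) :
    0 ≤ ∑ i, d i * z i ^ 2 ∧ (∑ i, d i * z i ^ 2 = 0 → z = 0) := by
  have := sum_def_neg (fun i => - d i) z (fun i hi => by simpa using h i hi)
  simp only [neg_mul, Finset.sum_neg_distrib, neg_eq_zero, Left.neg_nonpos_iff] at this
  exact this

theorem count_abs {N β : ℕ} {ι : Type*} [Fintype ι] (w : ι → ℝ) (hw : ∀ p, w p ≠ 0)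
    (H : Matrix (Fin N) (Fin N) ℝ) (hH : H.IsHermitian) (K : Matrix (Fin β) (Fin β) ℝ)
    (hK : K.IsHermitian) (k : Fin N) (l : ℝ) (hl : sortedEigs H k = l)
    (hs : ∀ i, sortedEigs H i = l → i = k)
    (T : ((Fin N → ℝ) × (Fin β → ℝ)) →ₗ[ℝ] (ι → ℝ)) (c : ℝ) (hc : 0 < c)
    (hB : ∀ y a, 2 * ∑ p, w p * (T (y, a) p) ^ 2 =
      2 * (qf H y - l * ∑ i, ‖y i‖ ^ 2) + c * qf K a)
    (hT : ∀ a, T (0, a) = 0 → a = 0) [DecidablePred fun p => w p < 0]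
    [DecidablePred fun i => sortedEigs K i < 0] :
    (k : ℕ) + Fintype.card {i // sortedEigs K i < 0} + Fintype.card {p // ¬ w p < 0} ≤
      Fintype.card ι ∧
    (N - 1 - k) + Fintype.card {i // ¬ sortedEigs K i < 0} + Fintype.card {p // w p < 0} ≤
      Fintype.card ι := by
  classical
  obtain ⟨U, hU1, hU2, -⟩ := exists_diag H hH
  obtain ⟨W, hW1, -, -⟩ := exists_diag K hK
  have hq : ∀ z, qf H (U.symm z) - l * ∑ i, ‖U.symm z i‖ ^ 2 =
      ∑ i, (sortedEigs H i - l) * z i ^ 2 := by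
    intro z
    rw [hU1, hU2, Finset.mul_sum, ← Finset.sum_sub_distrib]
    refine Finset.sum_congr rfl fun i _ => ?_
    simp [sub_mul]
  have hq2 : ∀ z, qf K (W.symm z) = ∑ i, sortedEigs K i * z i ^ 2 := by
    intro z
    rw [hW1]
    refine Finset.sum_congr rfl fun i _ => ?_
    simp
  have hmono := sortedEigs_mono H
  constructor
  · have := dim_lemma
      (T ∘ₗ LinearMap.prodMap (U.symm.toLinearMap ∘ₗ ext0 ℝ (fun i => i < k))
        (W.symm.toLinearMap ∘ₗ ext0 ℝ (fun i => sortedEigs K i < 0)))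
      (ext0 ℝ (fun p => ¬ w p < 0)) (by
      rintro ⟨z, b⟩ x hx
      simp only [LinearMap.comp_apply, LinearMap.prodMap_apply, LinearEquiv.coe_coe] at hx
      have e := hB (U.symm (ext0 ℝ (fun i => i < k) z))
        (W.symm (ext0 ℝ (fun i => sortedEigs K i < 0) b))
      rw [hq, hq2, hx] at e
      have n1 := sum_def_neg (fun i => sortedEigs H i - l) (ext0 ℝ (fun i => i < k) z) (by
        intro i hi
        have hik : i < k := by
          by_contra h
          exact hi (ext0_of_not (p := fun i => i < k) z h)
        have h1 : sortedEigs H i ≤ l := hl ▸ hmono hik.le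
        have h2 : sortedEigs H i ≠ l := fun h => hik.ne (hs i h)
        exact sub_neg.mpr (lt_of_le_of_ne h1 h2))
      have n2 := sum_def_neg (fun i => sortedEigs K i)
        (ext0 ℝ (fun i => sortedEigs K i < 0) b) (by
        intro i hi
        by_contra h
        exact hi (ext0_of_not (p := fun i => sortedEigs K i < 0) b h))
      have n3 := sum_def_pos w (ext0 ℝ (fun p => ¬ w p < 0) x) (by
        intro i hi
        have : ¬ w i < 0 := by
          by_contra h
          exact hi (ext0_of_not (p := fun p => ¬ w p < 0) x (not_not.mpr h))
        exact lt_of_le_of_ne (not_lt.mp this) (hw i).symm)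
      have n4 := mul_nonpos_of_nonneg_of_nonpos hc.le n2.1
      have z1 := ext0_inj _ (n1.2 (by linarith [n1.1, n3.1]))
      have z3 := ext0_inj _ (n3.2 (by linarith [n1.1, n3.1]))
      have z2 := ext0_inj _ (n2.2 (by
        have : c * ∑ i, sortedEigs K i * (ext0 ℝ (fun i => sortedEigs K i < 0) b) i ^ 2 = 0 := by
          linarith [n1.1, n3.1]
        exact (mul_eq_zero.mp this).resolve_left hc.ne'))
      exact ⟨Prod.ext z1 z2, z3⟩)
    rw [Module.finrank_prod, Module.finrank_fintype_fun_eq_card,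
      Module.finrank_fintype_fun_eq_card, Module.finrank_fintype_fun_eq_card,
      Module.finrank_fintype_fun_eq_card] at this
    have hk : Fintype.card {i : Fin N // i < k} = k := by
      rw [Fintype.card_subtype, Finset.filter_gt_eq_Iio, Fin.card_Iio]
    rw [hk] at this
    convert this using 2
  · have := dim_lemma
      (T ∘ₗ LinearMap.prodMap (U.symm.toLinearMap ∘ₗ ext0 ℝ (fun i => k < i))
        (W.symm.toLinearMap ∘ₗ ext0 ℝ (fun i => ¬ sortedEigs K i < 0)))
      (ext0 ℝ (fun p => w p < 0)) (by
      rintro ⟨z, b⟩ x hx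
      simp only [LinearMap.comp_apply, LinearMap.prodMap_apply, LinearEquiv.coe_coe] at hx
      have e := hB (U.symm (ext0 ℝ (fun i => k < i) z))
        (W.symm (ext0 ℝ (fun i => ¬ sortedEigs K i < 0) b))
      rw [hq, hq2, hx] at e
      have n1 := sum_def_pos (fun i => sortedEigs H i - l) (ext0 ℝ (fun i => k < i) z) (by
        intro i hi
        have hik : k < i := by
          by_contra h
          exact hi (ext0_of_not (p := fun i => k < i) z h)
        have h1 : l ≤ sortedEigs H i := hl ▸ hmono hik.le
        have h2 : sortedEigs H i ≠ l := fun h => hik.ne' (hs i h)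
        exact sub_pos.mpr (lt_of_le_of_ne h1 h2.symm))
      have n2 : 0 ≤ ∑ i, sortedEigs K i * (ext0 ℝ (fun i => ¬ sortedEigs K i < 0) b) i ^ 2 := by
        refine Finset.sum_nonneg fun i _ => ?_
        by_cases h : sortedEigs K i < 0
        · rw [ext0_of_not (p := fun i => ¬ sortedEigs K i < 0) b (not_not.mpr h)]
          simp
        · exact mul_nonneg (not_lt.mp h) (sq_nonneg _)
      have n3 := sum_def_neg w (ext0 ℝ (fun p => w p < 0) x) (by
        intro i hi
        by_contra h
        exact hi (ext0_of_not (p := fun p => w p < 0) x h))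
      have n4 := mul_nonneg hc.le n2
      have z1' := n1.2 (by linarith [n1.1, n3.1])
      have z3' := n3.2 (by linarith [n1.1, n3.1])
      rw [z1', z3', map_zero] at hx
      have z2 := hT _ hx
      rw [LinearEquiv.map_eq_zero_iff] at z2
      exact ⟨Prod.ext (ext0_inj _ z1') (ext0_inj _ z2), ext0_inj _ z3'⟩)
    rw [Module.finrank_prod, Module.finrank_fintype_fun_eq_card,
      Module.finrank_fintype_fun_eq_card, Module.finrank_fintype_fun_eq_card,
      Module.finrank_fintype_fun_eq_card] at this
    have hk : Fintype.card {i : Fin N // k < i} = N - 1 - k := by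
      rw [Fintype.card_subtype, Finset.filter_lt_eq_Ioi, Fin.card_Ioi]
    rw [hk] at this
    convert this using 2

abbrev Ed {N : ℕ} (G : SimpleGraph (Fin N)) : Type :=
  {p : Fin N × Fin N // p.1 < p.2 ∧ G.Adj p.1 p.2}

theorem card_Ed {N : ℕ} (G : SimpleGraph (Fin N)) (P : Fin N → Fin N → Prop)
    (hP : ∀ u v, P u v → P v u) :
    {e : Sym2 (Fin N) | e ∈ G.edgeSet ∧ ∀ u v : Fin N, e = s(u, v) → P u v}.ncard =
      Nat.card {p : Ed G // P p.1.1 p.1.2} := by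
  symm
  rw [← Nat.card_coe_set_eq]
  refine Nat.card_congr (Equiv.ofBijective (fun p => ⟨s(p.1.1.1, p.1.1.2), p.1.2.2, ?_⟩) ⟨?_, ?_⟩)
  · intro u v h
    rcases Sym2.eq_iff.mp h with ⟨h1, h2⟩ | ⟨h1, h2⟩
    · rw [← h1, ← h2]; exact p.2
    · rw [← h1, ← h2]; exact hP _ _ p.2
  · rintro ⟨⟨⟨a, b⟩, h1, h2⟩, h3⟩ ⟨⟨⟨c, d⟩, h4, h5⟩, h6⟩ h
    have h : s(a, b) = s(c, d) := congrArg Subtype.val h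
    rcases Sym2.eq_iff.mp h with ⟨rfl, rfl⟩ | ⟨rfl, rfl⟩
    · rfl
    · exact absurd h1 (lt_asymm h4)
  · rintro ⟨e, he, h⟩
    induction e using Sym2.ind with
    | _ a b =>
    have hab : G.Adj a b := he
    rcases lt_or_gt_of_ne hab.ne with hlt | hlt
    · exact ⟨⟨⟨(a, b), hlt, hab⟩, h a b rfl⟩, rfl⟩
    · exact ⟨⟨⟨(b, a), hlt, hab.symm⟩, h b a Sym2.eq_swap⟩, Subtype.ext Sym2.eq_swap⟩

theorem sum_Ed {N : ℕ} (G : SimpleGraph (Fin N)) [DecidableRel G.Adj] (X : Fin N → Fin N → ℝ)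
    (hX : ∀ u v, X u v = X v u) :
    ∑ u, ∑ v, Cc G u v * X u v = 2 * ∑ p : Ed G, X p.1.1 p.1.2 := by
  have e1 : ∀ u v, Cc G u v * X u v = (if u < v then Cc G u v * X u v else 0) +
      (if v < u then Cc G v u * X v u else 0) := by
    intro u v
    rcases lt_trichotomy u v with h | h | h
    · simp [h, h.not_gt]
    · subst h; simp [Cc]
    · simp [h, h.not_gt, Cc_symm G u v, hX u v]
  have e2 : ∑ u, ∑ v, (if u < v then Cc G u v * X u v else 0) = ∑ p : Ed G, X p.1.1 p.1.2 := by
    rw [← Fintype.sum_prod_type' (f := fun u v => if u < v then Cc G u v * X u v else 0)]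
    rw [← Finset.sum_subtype (p := fun p : Fin N × Fin N => p.1 < p.2 ∧ G.Adj p.1 p.2)
      (Finset.univ.filter fun p : Fin N × Fin N => p.1 < p.2 ∧ G.Adj p.1 p.2) (by simp)
      (fun p => X p.1 p.2), Finset.sum_filter]
    refine Finset.sum_congr rfl fun p _ => ?_
    by_cases h1 : p.1 < p.2 <;> by_cases h2 : G.Adj p.1 p.2 <;> simp [h1, h2, Cc]
  rw [Finset.sum_congr rfl fun u _ => Finset.sum_congr rfl fun v _ => e1 u v]
  simp only [Finset.sum_add_distrib]
  rw [Finset.sum_comm (f := fun u v => if v < u then Cc G v u * X v u else 0), e2]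
  ring

end NS

namespace NS

open Matrix Topology Filter


theorem main_aux {N β : ℕ} (G : SimpleGraph (Fin N))
    [DecidableRel G.Adj] (hconn : G.Connected) (q : Fin N → ℝ)
    (uE vE : Fin β → Fin N) (horder : ∀ j, uE j < vE j)
    (hadj : ∀ j, G.Adj (uE j) (vE j))
    (hdistinct : ∀ i j, s(uE i, vE i) = s(uE j, vE j) → i = j)
    (htree : (G.deleteEdges {e | ∃ j, e = s(uE j, vE j)}).IsTree)
    (hβ : β + N = G.edgeFinset.card + 1)
    (n : ℕ) (hn1 : 1 ≤ n) (hn2 : n ≤ N)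
    (f : Fin N → ℝ)
    (heig : (schrodOp G q).mulVec f = sE (schrodOp G q) (n - 1) • f)
    (hsimple : Module.finrank ℝ
      (Module.End.eigenspace (Matrix.toLin' (schrodOp G q)) (sE (schrodOp G q) (n - 1))) = 1)
    (hf0 : ∀ v, f v ≠ 0)
    (φ : ℕ) (hφ : φ = signChanges G f)
    (lamMag : (Fin β → ℝ) → ℝ)
    (hlamMag : lamMag = fun α => sE (schrodMag G q uE vE α) (n - 1)) :
    fderiv ℝ lamMag 0 = 0 ∧
    negEigCount (hessMat lamMag 0) + (n - 1) = φ := by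
  classical
  have hnN : n - 1 < N := by omega
  set k : Fin N := ⟨n - 1, hnN⟩ with hk
  have hsE : sE (schrodOp G q) (n - 1) = sortedEigs (schrodOp G q) k := by
    simp [sE, hnN, hk]
  rw [hsE] at heig hsimple
  set H := schrodOp G q with hHdef
  set l := sortedEigs H k with hl
  set M : (Fin β → ℝ) → Matrix (Fin N) (Fin N) ℂ := fun α => schrodMag G q uE vE α with hMdef
  have hlam : lamMag = fun α => sortedEigs (M α) k := by
    rw [hlamMag]
    funext α
    simp [sE, hnN, hk, hMdef]
  set A := NS.At uE vE with hA
  have hMap : ∀ α u v, M α u v = ((if u = v then q u else 0 : ℝ) : ℂ) -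
      (NS.Cc G u v : ℂ) * Complex.exp (Complex.I * (A α u v : ℝ)) := fun α u v =>
    NS.schrodMag_apply G q uE vE horder hadj hdistinct α u v
  have hAn : ∀ α u v, A (-α) u v = A α v u := by
    intro α u v
    have h1 := NS.At_smul uE vE (-1) α u v
    rw [neg_one_smul] at h1
    rw [hA, h1, NS.At_antisymm uE vE α u v]
    ring
  have hA0 : ∀ u v, A 0 u v = 0 := by
    intro u v
    have := NS.At_smul uE vE 0 0 u v
    simpa using this
  have hHap : ∀ u v, H u v = (if u = v then q u else 0) - NS.Cc G u v :=
    fun u v => NS.schrodOp_apply G q u v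
  have hdiag : ∀ u v, (if u = v then q u else 0) = (if v = u then q v else 0) := by
    intro u v
    by_cases h : u = v
    · subst h; rfl
    · simp [h, Ne.symm h]
  have hHs : H.IsHermitian := by
    ext u v
    rw [Matrix.conjTranspose_apply, hHap, hHap, NS.Cc_symm G u v, hdiag]
    simp
  have hMt : ∀ α, M (-α) = (M α)ᵀ := by
    intro α
    ext u v
    rw [Matrix.transpose_apply, hMap, hMap, NS.Cc_symm G u v, hdiag, hAn]
  have hMs : ∀ α, (M α).IsHermitian := by
    intro α
    ext u v
    rw [Matrix.conjTranspose_apply, hMap, hMap, NS.Cc_symm G u v, hdiag, hA,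
      NS.At_antisymm uE vE α u v]
    simp only [Complex.star_def, map_sub, map_mul, Complex.conj_ofReal, ← Complex.exp_conj,
      Complex.conj_I]
    simp
  have hM0 : M 0 = H.map (fun x => (x : ℂ)) := by
    ext u v
    rw [hMap, hA0, Matrix.map_apply, hHap]
    simp
  have hMc : ∀ u v, ContDiff ℝ 2 (fun α => M α u v) := by
    intro u v
    simp only [hMap]
    have hAc : ContDiff ℝ 2 (fun α => ((A α u v : ℝ) : ℂ)) := by
      have : ContDiff ℝ 2 (fun α => A α u v) := by
        simp only [hA, NS.At]
        refine ContDiff.sum fun j _ => ContDiff.sub ?_ ?_ <;> split_ifs <;> fun_prop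
      exact Complex.ofRealCLM.contDiff.comp this
    exact contDiff_const.sub (contDiff_const.mul (contDiff_const.mul hAc).cexp)
  have hf : f ≠ 0 := fun h => hf0 k (by rw [h]; rfl)
  have hN : 0 < ∑ u, f u ^ 2 := by
    have := NS.nsq_pos hf
    simpa using this
  have hdsum : ∀ (y : Fin N → ℝ) u, (H *ᵥ y) u = q u * y u - ∑ v, NS.Cc G u v * y v := by
    intro y u
    simp only [Matrix.mulVec, dotProduct, hHap, sub_mul, Finset.sum_sub_distrib]
    simp
  have hfe : ∀ u, (q u - l) * f u = ∑ v, NS.Cc G u v * f v := by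
    intro u
    have := congrFun heig u
    rw [hdsum] at this
    simp only [Pi.smul_apply, smul_eq_mul] at this
    linarith
  have hCs : ∀ u v, NS.Cc G u v = NS.Cc G v u := NS.Cc_symm G
  have hder : fderiv ℝ lamMag 0 = 0 := by
    refine NS.even_fderiv lamMag fun α => ?_
    rw [hlam]
    simp only [hMt, NS.sorted_transpose _ (hMs α)]
  refine ⟨hder, ?_⟩
  obtain ⟨g, hg, hg0, hlamc, hev⟩ := NS.smooth_branch M hMc hMs H hHs hM0 k l rfl hsimple f hf heig
  rw [← hlam] at hlamc
  have hlam0 : lamMag 0 = l := by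
    rw [hlam]
    simp only [hM0, NS.sorted_map H hHs, hl]
  have hev2 : ∀ᶠ α in 𝓝 0, M α *ᵥ g α = (lamMag α : ℂ) • g α := by
    rw [hlam]; exact hev
  have hform := NS.hess_form (NS.Cc G) hCs q f hf0 hN l hfe A
    (fun x u v => NS.At_antisymm uE vE x u v) (fun t x u v => NS.At_smul uE vE t x u v)
    M hMap lamMag hlamc hlam0 hder g (hg.differentiableAt (by norm_num)) hg0 hev2
  set D := fderiv ℝ g 0 with hD
  let θ : (Fin β → ℝ) → Fin N → ℝ := fun a u => (D a u).im / f u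
  have hθa : ∀ a b u, θ (a + b) u = θ a u + θ b u := fun a b u => by
    simp only [θ, map_add, Pi.add_apply, Complex.add_im]; ring
  have hθs : ∀ (c : ℝ) a u, θ (c • a) u = c * θ a u := fun c a u => by
    simp only [θ, map_smul, Pi.smul_apply, Complex.smul_im, smul_eq_mul]; ring
  let T : ((Fin N → ℝ) × (Fin β → ℝ)) →ₗ[ℝ] (NS.Ed G → ℝ) :=
    { toFun := fun z p => (z.1 p.1.1 / f p.1.1 - z.1 p.1.2 / f p.1.2) +
        (θ z.2 p.1.1 - θ z.2 p.1.2 - A z.2 p.1.1 p.1.2)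
      map_add' := by
        intro z z'
        ext p
        simp only [Prod.fst_add, Prod.snd_add, Pi.add_apply, hθa, hA, NS.At_add]
        ring
      map_smul' := by
        intro c z
        ext p
        simp only [Prod.smul_fst, Prod.smul_snd, Pi.smul_apply, hθs, hA, NS.At_smul, smul_eq_mul,
          RingHom.id_apply]
        ring }
  have hTap : ∀ y a p, T (y, a) p = (y p.1.1 / f p.1.1 - y p.1.2 / f p.1.2) +
        (θ a p.1.1 - θ a p.1.2 - A a p.1.1 p.1.2) := fun y a p => rfl
  have hB : ∀ y a, 2 * ∑ p : NS.Ed G, (f p.1.1 * f p.1.2) * (T (y, a) p) ^ 2 =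
      2 * (NS.qf H y - l * ∑ i, ‖y i‖ ^ 2) +
        (∑ u, f u ^ 2) * NS.qf (hessMat lamMag 0) a := by
    intro y a
    simp only [hTap]
    rw [← NS.sum_Ed G (fun u v => (f u * f v) * ((y u / f u - y v / f v) +
        (θ a u - θ a v - A a u v)) ^ 2) (by
      intro u v
      have := NS.At_antisymm uE vE a u v
      simp only [hA, this]
      ring)]
    have g1 := NS.ground_real (NS.Cc G) hCs q f l hfe (fun u => y u / f u) (fun u => y u / f u)
    have g2 := (hform a).2 (fun u => y u / f u)
    have g3 := (hform a).1
    have e1 : ∀ u v, NS.Cc G u v * ((f u * f v) * ((y u / f u - y v / f v) +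
        (θ a u - θ a v - A a u v)) ^ 2) =
        NS.Cc G u v * (f u * f v) * ((y u / f u - y v / f v) * (y u / f u - y v / f v)) +
        2 * (NS.Cc G u v * (f u * f v) * ((y u / f u - y v / f v) *
          (θ a u - θ a v - A a u v))) +
        NS.Cc G u v * (f u * f v) * (θ a u - θ a v - A a u v) ^ 2 := by
      intro u v; ring
    simp only [e1, Finset.sum_add_distrib, ← Finset.mul_sum]
    simp only [θ]
    rw [g1, g2, ← g3]
    have hcan : ∀ u, f u * (y u / f u) = y u := fun u => mul_div_cancel₀ _ (hf0 u)
    simp only [hcan]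
    have e2 : NS.qf H y - l * ∑ i, ‖y i‖ ^ 2 =
        ∑ u, y u * ((q u - l) * y u - ∑ v, NS.Cc G u v * y v) := by
      simp only [NS.qf, dotProduct, hdsum, Pi.star_apply, star_trivial, RCLike.re_to_real]
      rw [Finset.mul_sum, ← Finset.sum_sub_distrib]
      refine Finset.sum_congr rfl fun u _ => ?_
      simp only [Real.norm_eq_abs, sq_abs]
      ring
    rw [e2]
    ring
  have hT : ∀ a, T (0, a) = 0 → a = 0 := by
    intro a ha
    have h1 : ∀ u v, G.Adj u v → θ a u - θ a v = A a u v := by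
      intro u v huv
      rcases lt_or_gt_of_ne huv.ne with h | h
      · have := congrFun ha ⟨(u, v), h, huv⟩
        rw [hTap] at this
        simp at this
        linarith
      · have := congrFun ha ⟨(v, u), h, huv.symm⟩
        rw [hTap] at this
        simp at this
        have h2 := NS.At_antisymm uE vE a u v
        rw [← hA] at h2
        linarith
    have h2 : ∀ u v, (G.deleteEdges {e | ∃ j, e = s(uE j, vE j)}).Adj u v → θ a u = θ a v := by
      intro u v huv
      rw [SimpleGraph.deleteEdges_adj] at huv
      have h3 := h1 u v huv.1
      rw [hA, NS.At_non uE vE a u v (fun j hj => huv.2 ⟨j, hj⟩)] at h3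
      linarith
    have h4 : ∀ u v, θ a u = θ a v := by
      intro u v
      obtain ⟨p⟩ := htree.1.preconnected u v
      induction p with
      | nil => rfl
      | cons h _ ih => exact (h2 _ _ h).trans ih
    ext j
    have h5 := h1 _ _ (hadj j)
    rw [h4 (uE j) (vE j), sub_self, hA, NS.At_edge uE vE horder hdistinct] at h5
    simpa using h5.symm
  have hcount := NS.count_abs (fun p : NS.Ed G => f p.1.1 * f p.1.2)
    (fun p => mul_ne_zero (hf0 _) (hf0 _)) H hHs (hessMat lamMag 0) (NS.hess_symm lamMag hlamc)
    k l rfl (fun i hi => NS.sorted_inj H hHs l hsimple i k hi rfl) T (∑ u, f u ^ 2) hN hB hT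
  have c1 : Fintype.card (NS.Ed G) = G.edgeFinset.card := by
    have := NS.card_Ed G (fun _ _ => True) (fun _ _ _ => trivial)
    simp only [implies_true, and_true] at this
    rw [← Nat.card_eq_fintype_card, ← Nat.card_congr (Equiv.subtypeUnivEquiv
      (p := fun _ : NS.Ed G => True) (fun _ => trivial)), ← this]
    rw [← Set.ncard_coe_finset, SimpleGraph.coe_edgeFinset]
    rfl
  have c2 : Fintype.card {p : NS.Ed G // f p.1.1 * f p.1.2 < 0} = φ := by
    rw [hφ, signChanges, NS.card_Ed G (fun u v => f u * f v < 0)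
      (fun u v h => by rwa [mul_comm]), Nat.card_eq_fintype_card]
  have c3 : Fintype.card {i // sortedEigs (hessMat lamMag 0) i < 0} =
      negEigCount (hessMat lamMag 0) := by
    rw [negEigCount, ← Nat.card_coe_set_eq, Nat.card_eq_fintype_card]
    rfl
  have c4 := Fintype.card_subtype_compl (fun p : NS.Ed G => f p.1.1 * f p.1.2 < 0)
  have c5 := Fintype.card_subtype_compl (fun i => sortedEigs (hessMat lamMag 0) i < 0)
  have c6 := Fintype.card_subtype_le (fun p : NS.Ed G => f p.1.1 * f p.1.2 < 0)
  have c7 := Fintype.card_subtype_le (fun i => sortedEigs (hessMat lamMag 0) i < 0)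
  have hkv : (k : ℕ) = n - 1 := rfl
  rw [c4, c5, c2, c3, c1, hkv, Fintype.card_fin] at hcount
  rw [c2, c1] at c6
  rw [c3, Fintype.card_fin] at c7
  omega

end NS

/-- Main theorem: `α = 0` is a critical point of `α ↦ λ_n(H(Γ^α_mag))`, and
its Morse index equals the nodal surplus `σ = φ - (n - 1)` (stated additively as
`index + (n-1) = φ` to avoid truncated `ℕ`-subtraction). -/
theorem nodal_surplus_eq_morse_index {N β : ℕ} (G : SimpleGraph (Fin N))
    [DecidableRel G.Adj] (hconn : G.Connected) (q : Fin N → ℝ)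
    (uE vE : Fin β → Fin N) (horder : ∀ j, uE j < vE j)
    (hadj : ∀ j, G.Adj (uE j) (vE j))
    (hdistinct : ∀ i j, s(uE i, vE i) = s(uE j, vE j) → i = j)
    (htree : (G.deleteEdges {e | ∃ j, e = s(uE j, vE j)}).IsTree)
    (hβ : β + N = G.edgeFinset.card + 1)
    (n : ℕ) (hn1 : 1 ≤ n) (hn2 : n ≤ N)
    (f : Fin N → ℝ)
    (heig : (schrodOp G q).mulVec f = sE (schrodOp G q) (n - 1) • f)
    (hsimple : Module.finrank ℝ
      (Module.End.eigenspace (Matrix.toLin' (schrodOp G q)) (sE (schrodOp G q) (n - 1))) = 1)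
    (hf0 : ∀ v, f v ≠ 0)
    (φ : ℕ) (hφ : φ = signChanges G f)
    (lamMag : (Fin β → ℝ) → ℝ)
    (hlamMag : lamMag = fun α => sE (schrodMag G q uE vE α) (n - 1)) :
    fderiv ℝ lamMag 0 = 0 ∧
    negEigCount (hessMat lamMag 0) + (n - 1) = φ := by
  exact NS.main_aux G hconn q uE vE horder hadj hdistinct htree hβ n hn1 hn2 f heig hsimple hf0
    φ hφ lamMag hlamMag
end
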